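/- Let φ be as in the standing hypotheses and satisfy the vanishing expansion of order 1/2 at a with coefficients c₁, d₁, and let M_a be the limit of the ∂D_ε(a)-boundary integrals (which exists). Then for every r with a₁ < r < r₀ the map r ↦ E(φ,r,π(a),λ,A_a) is differentiable and (d/dr) E(φ,r,π(a),λ,A_a) = 2∫_{∂D_r⁺(π(a))} |(i∇+A_a)φ·ν|² dσ − (λ/r)·∫_{D_r⁺(π(a))} |φ|²·(2p + ∇p·(x−π(a))) dx − (2/r)·M_a, where ν is the outward unit normal. -/

import Mathlib

/-!
Write `m = (i∇ + A_a)φ` and `X = x - π(a)`. The proof is a Pohozaev identity for the vector field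
`W = Re[conj(m·X) m] - (1/2)(|m|² - λp|φ|²) X`. Away from `a` the potential is curl-free and
`φ` solves the equation, so `div W = (λ/2)|φ|²(2p + ∇p·X)` (`Sol.poho_div`). On the arc
`|X| = r` the normal component of `W` is `r|m·ν|² - (r/2)(|m|² - λp|φ|²)`.

`W` is integrated over the half-disk after splitting it by a bump function at `a`.

* The piece vanishing near `a` contributes the flux through the arc (`Sol.outer_flux`). The flat
  boundary contributes nothing: in the limit, only the product of the normal component of `m` and
  `m·X` survives there, and `m·X` is tangential, hence zero since `φ = 0` on the axis. As `φ` is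
  only assumed continuous up to the axis, this rests on the boundary regularity `Sol.near_bdry`:
  `m₁` stays bounded and `m₂ = O(x₁)`. On `{x₁ < a₁}` the potential is a gradient, so a gauge factor
  turns the equation into `-Δψ = λpψ` (`hasLap_gauge`). A barrier gives `ψ = O(x₁)`
  (`norm_le_of_hasLap`), interior gradient estimates give `∇ψ = O(1)`, and the barrier applied to
  tangential difference quotients gives `∂₂ψ = O(x₁)` (`strip_estimate`).
* The piece supported near `a` contributes minus the limit of the flux through `∂D_ε(a)`
  (`Sol.inner_flux`). That limit is `M_a`, because the potential term in `W` is bounded and the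
  circles shrink (`Sol.tendsto_flux`).

The sum is `Sol.pohozaev`. Finally `dE/dr` is the integral of the energy density
`|m|² - λp|φ|²` over the arc (`Sol.hasDerivAt_energy`: polar coordinates, the fundamental theorem of
calculus, and continuity of the arc integral by dominated convergence), and the Pohozaev identity
solved for that integral (`Sol.energy_arc`) is the claimed formula.
-/

open MeasureTheory Real Filter Set Asymptotics

noncomputable section

/-- The open half-disk `D_r⁺(c)`: points at distance `< r` from `c` with positive
first coordinate (we identify `ℝ²` with `ℂ`). -/
def halfDisk (c : ℂ) (r : ℝ) : Set ℂ := {x : ℂ | dist x c < r ∧ 0 < x.re}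

/-- Projection onto the axis `{x₁ = 0}`: `π(a) = (0, a₂)`. -/
def proj (a : ℂ) : ℂ := (a.im : ℂ) * Complex.I

/-- First partial derivative of a complex-valued function on `ℝ² = ℂ`. -/
def pd1 (u : ℂ → ℂ) (x : ℂ) : ℂ := fderiv ℝ u x 1

/-- Second partial derivative of a complex-valued function on `ℝ² = ℂ`. -/
def pd2 (u : ℂ → ℂ) (x : ℂ) : ℂ := fderiv ℝ u x Complex.I

/-- The Aharonov–Bohm potential `A_a(x)`, encoded as the complex number whose real and
imaginary parts are its two components:
`A_a(x) = (1/2)(−(x₂−a₂)/|x−a|², (x₁−a₁)/|x−a|²) = i(x−a)/(2|x−a|²)`. -/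
def abPot (a x : ℂ) : ℂ := Complex.I * (x - a) / (2 * (‖x - a‖ : ℂ) ^ 2)

/-- First component of `A_a`. -/
def abPot1 (a x : ℂ) : ℝ := (abPot a x).re

/-- Second component of `A_a`. -/
def abPot2 (a x : ℂ) : ℝ := (abPot a x).im

/-- First component of the magnetic gradient `(i∇ + A_a)u`. -/
def mg1 (a : ℂ) (u : ℂ → ℂ) (x : ℂ) : ℂ := Complex.I * pd1 u x + (abPot1 a x : ℂ) * u x

/-- Second component of the magnetic gradient `(i∇ + A_a)u`. -/
def mg2 (a : ℂ) (u : ℂ → ℂ) (x : ℂ) : ℂ := Complex.I * pd2 u x + (abPot2 a x : ℂ) * u x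

/-- `|(i∇+A_a)u|²`. -/
def mgSq (a : ℂ) (u : ℂ → ℂ) (x : ℂ) : ℝ := ‖mg1 a u x‖ ^ 2 + ‖mg2 a u x‖ ^ 2

/-- Arclength integral of `f` over the circular part `∂D_r⁺(c)` of the boundary of a
half-disk centered at a point `c` on the axis `{x₁ = 0}`, parametrized by the angle
`θ ∈ (−π/2, π/2)`. -/
def bdryInt (c : ℂ) (r : ℝ) (f : ℂ → ℝ) : ℝ :=
  ∫ θ in Ioo (-(π / 2)) (π / 2), r * f (circleMap c r θ)

/-- The Laplacian of a complex-valued function. -/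
def lapC (u : ℂ → ℂ) (x : ℂ) : ℂ :=
  fderiv ℝ (fun y => pd1 u y) x 1 + fderiv ℝ (fun y => pd2 u y) x Complex.I

/-- Divergence `∇·A_a`. -/
def divAB (a x : ℂ) : ℝ := fderiv ℝ (abPot1 a) x 1 + fderiv ℝ (abPot2 a) x Complex.I

/-- The magnetic Laplacian `(i∇+A_a)²u = −Δu + i(∇·A_a)u + 2i A_a·∇u + |A_a|²u`. -/
def magLap (a : ℂ) (u : ℂ → ℂ) (x : ℂ) : ℂ :=
  - lapC u x + Complex.I * (divAB a x : ℂ) * u x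
    + 2 * Complex.I * ((abPot1 a x : ℂ) * pd1 u x + (abPot2 a x : ℂ) * pd2 u x)
    + ((abPot1 a x ^ 2 + abPot2 a x ^ 2 : ℝ) : ℂ) * u x

/-- The Almgren energy `E(u,r,c,λ,A_a) = ∫_{D_r⁺(c)} (|(i∇+A_a)u|² − λp|u|²) dx`. -/
def Efun (a : ℂ) (u : ℂ → ℂ) (r : ℝ) (c : ℂ) (lam : ℝ) (p : ℂ → ℝ) : ℝ :=
  ∫ x in halfDisk c r, (mgSq a u x - lam * p x * ‖u x‖ ^ 2)

/-- `H(u,r,c) = (1/r)∫_{∂D_r⁺(c)} |u|² dσ`. -/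
def Hfun (u : ℂ → ℂ) (r : ℝ) (c : ℂ) : ℝ := (1 / r) * bdryInt c r fun x => ‖u x‖ ^ 2

/-- The Almgren frequency `N = E/H`. -/
def Nfun (a : ℂ) (u : ℂ → ℂ) (r : ℝ) (c : ℂ) (lam : ℝ) (p : ℂ → ℝ) : ℝ :=
  Efun a u r c lam p / Hfun u r c

/-- The Pohozaev boundary integrand at a point `x` with unit normal `ν = (ν₁,ν₂)`:
`Re[(i∇+A_a)φ·ν · conj((i∇+A_a)φ·(x−π(a)))] − (1/2)|(i∇+A_a)φ|² (x−π(a))·ν`. -/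
def pohoIntegrand (a : ℂ) (φ : ℂ → ℂ) (x : ℂ) (ν1 ν2 : ℝ) : ℝ :=
  ((mg1 a φ x * (ν1 : ℂ) + mg2 a φ x * (ν2 : ℂ)) *
      (starRingEnd ℂ) (mg1 a φ x * (((x - proj a).re : ℝ) : ℂ) +
        mg2 a φ x * (((x - proj a).im : ℝ) : ℂ))).re -
    (1 / 2) * mgSq a φ x * ((x - proj a).re * ν1 + (x - proj a).im * ν2)

/-- The integral over the full circle `∂D_ε(a)` whose limit as `ε → 0⁺` defines the
Pohozaev remainder `M_a`. -/
def pohoBdry (a : ℂ) (φ : ℂ → ℂ) (ε : ℝ) : ℝ :=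
  ∫ θ in Ioc 0 (2 * π), ε * pohoIntegrand a φ (circleMap a ε θ) (Real.cos θ) (Real.sin θ)

/-- The model half-integer homogeneous function
`e^{iθ_a/2}|x−a|^{1/2}( c₁ cos(θ_a/2) + d₁ sin(θ_a/2) )`, written in the branch-free form
`|x−a|^{1/2}( c₁(1+ω)/2 + d₁(ω−1)/(2i) )` with `ω = (x−a)/|x−a|`. -/
def modelHalf (a : ℂ) (c₁ d₁ : ℝ) (x : ℂ) : ℂ :=
  (Real.sqrt ‖x - a‖ : ℂ) *
    ((c₁ : ℂ) * (1 + (x - a) / (‖x - a‖ : ℂ)) / 2 +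
      (d₁ : ℂ) * ((x - a) / (‖x - a‖ : ℂ) - 1) / (2 * Complex.I))

/-! ### Laplacians along coordinate lines and the boundary barrier -/

/-- `u` has partial derivatives `u1`, `u2` on `U`, each differentiable again in its own variable, and
`L` is the sum of the two second derivatives. Only derivatives along coordinate lines are involved. -/
def HasLap {E : Type*} [NormedAddCommGroup E] [NormedSpace ℝ E]
    (u u1 u2 : ℂ → E) (L : ℂ → E) (U : Set ℂ) : Prop :=
  ∃ u11 u22 : ℂ → E, ∀ z ∈ U,
    HasDerivAt (fun t : ℝ => u (z + t)) (u1 z) 0 ∧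
    HasDerivAt (fun t : ℝ => u1 (z + t)) (u11 z) 0 ∧
    HasDerivAt (fun t : ℝ => u (z + t * Complex.I)) (u2 z) 0 ∧
    HasDerivAt (fun t : ℝ => u2 (z + t * Complex.I)) (u22 z) 0 ∧
    u11 z + u22 z = L z

lemma HasLap.mono {E : Type*} [NormedAddCommGroup E] [NormedSpace ℝ E]
    {u u1 u2 L : ℂ → E} {U V : Set ℂ} (h : HasLap u u1 u2 L U) (hV : V ⊆ U) :
    HasLap u u1 u2 L V := by
  obtain ⟨u11, u22, h⟩ := h
  exact ⟨u11, u22, fun z hz => h z (hV hz)⟩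

lemma HasLap.sub {E : Type*} [NormedAddCommGroup E] [NormedSpace ℝ E]
    {u u1 u2 L v v1 v2 K : ℂ → E} {U : Set ℂ} (h : HasLap u u1 u2 L U)
    (h' : HasLap v v1 v2 K U) :
    HasLap (fun z => u z - v z) (fun z => u1 z - v1 z) (fun z => u2 z - v2 z)
      (fun z => L z - K z) U := by
  obtain ⟨u11, u22, h⟩ := h
  obtain ⟨v11, v22, h'⟩ := h'
  refine ⟨fun z => u11 z - v11 z, fun z => u22 z - v22 z, fun z hz => ?_⟩
  obtain ⟨a1, a2, a3, a4, a5⟩ := h z hz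
  obtain ⟨b1, b2, b3, b4, b5⟩ := h' z hz
  refine ⟨a1.sub b1, a2.sub b2, a3.sub b3, a4.sub b4, ?_⟩
  simp only [← a5, ← b5]; abel

lemma HasLap.clm {E F : Type*} [NormedAddCommGroup E] [NormedSpace ℝ E]
    [NormedAddCommGroup F] [NormedSpace ℝ F] (T : E →L[ℝ] F)
    {u u1 u2 L : ℂ → E} {U : Set ℂ} (h : HasLap u u1 u2 L U) :
    HasLap (fun z => T (u z)) (fun z => T (u1 z)) (fun z => T (u2 z)) (fun z => T (L z)) U := by
  obtain ⟨u11, u22, h⟩ := h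
  refine ⟨fun z => T (u11 z), fun z => T (u22 z), fun z hz => ?_⟩
  obtain ⟨a1, a2, a3, a4, a5⟩ := h z hz
  refine ⟨T.hasFDerivAt.comp_hasDerivAt _ a1, T.hasFDerivAt.comp_hasDerivAt _ a2,
    T.hasFDerivAt.comp_hasDerivAt _ a3, T.hasFDerivAt.comp_hasDerivAt _ a4, ?_⟩
  simp only [← a5, map_add]

lemma HasLap.translate {E : Type*} [NormedAddCommGroup E] [NormedSpace ℝ E]
    {u u1 u2 L : ℂ → E} {U : Set ℂ} (h : HasLap u u1 u2 L U) (w : ℂ) :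
    HasLap (fun z => u (w + z)) (fun z => u1 (w + z)) (fun z => u2 (w + z)) (fun z => L (w + z))
      {z | w + z ∈ U} := by
  obtain ⟨u11, u22, h⟩ := h
  refine ⟨fun z => u11 (w + z), fun z => u22 (w + z), fun z hz => ?_⟩
  simpa only [add_assoc] using h (w + z) hz

/-- The Laplacian is invariant under the reflection `x + iy ↦ -x + iy`. -/
lemma HasLap.reflect {E : Type*} [NormedAddCommGroup E] [NormedSpace ℝ E]
    {u u1 u2 L : ℂ → E} {U : Set ℂ} (h : HasLap u u1 u2 L U) :
    HasLap (fun z => u (-(starRingEnd ℂ z))) (fun z => -u1 (-(starRingEnd ℂ z)))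
      (fun z => u2 (-(starRingEnd ℂ z))) (fun z => L (-(starRingEnd ℂ z)))
      {z | -(starRingEnd ℂ z) ∈ U} := by
  obtain ⟨u11, u22, h⟩ := h
  refine ⟨fun z => u11 (-(starRingEnd ℂ z)), fun z => u22 (-(starRingEnd ℂ z)), fun z hz => ?_⟩
  obtain ⟨a1, a2, a3, a4, a5⟩ := h _ hz
  have key : ∀ {g : ℂ → E} {g' : E} (z : ℂ),
      HasDerivAt (fun t : ℝ => g (-(starRingEnd ℂ z) + t)) g' 0 →
      HasDerivAt (fun t : ℝ => g (-(starRingEnd ℂ (z + t)))) (-g') 0 := by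
    intro g g' z hg
    have h0 : HasDerivAt (fun t : ℝ => -t) (-1) 0 := (hasDerivAt_id 0).neg
    have h1 : HasDerivAt (fun t : ℝ => g (-(starRingEnd ℂ z) + t)) g' (-0) := by simpa using hg
    have := HasDerivAt.scomp (0:ℝ) h1 h0
    simp only [neg_smul, one_smul] at this
    refine this.congr_of_eventuallyEq (Eventually.of_forall fun t => ?_)
    simp [Function.comp, add_comm]
  refine ⟨key z a1, ?_, ?_, ?_, a5⟩
  · have := (key z a2).neg
    rw [neg_neg] at this
    exact this
  · simpa [add_comm] using a3
  · simpa [add_comm] using a4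

/-- The Laplacian is invariant under the exchange of coordinates `x + iy ↦ y + ix`. -/
lemma HasLap.swap {E : Type*} [NormedAddCommGroup E] [NormedSpace ℝ E]
    {u u1 u2 L : ℂ → E} {U : Set ℂ} (h : HasLap u u1 u2 L U) :
    HasLap (fun z => u (Complex.I * starRingEnd ℂ z)) (fun z => u2 (Complex.I * starRingEnd ℂ z))
      (fun z => u1 (Complex.I * starRingEnd ℂ z)) (fun z => L (Complex.I * starRingEnd ℂ z))
      {z | Complex.I * starRingEnd ℂ z ∈ U} := by
  obtain ⟨u11, u22, h⟩ := h
  refine ⟨fun z => u22 (Complex.I * starRingEnd ℂ z), fun z => u11 (Complex.I * starRingEnd ℂ z),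
    fun z hz => ?_⟩
  obtain ⟨a1, a2, a3, a4, a5⟩ := h _ hz
  have e1 : ∀ t : ℝ, Complex.I * (starRingEnd ℂ) (z + t) =
      Complex.I * (starRingEnd ℂ) z + t * Complex.I := by
    intro t; simp; ring
  have e2 : ∀ t : ℝ, Complex.I * (starRingEnd ℂ) (z + t * Complex.I) =
      Complex.I * (starRingEnd ℂ) z + t := by
    intro t; simp; linear_combination (-(t:ℂ)) * Complex.I_mul_I
  simp only [e1, e2]
  exact ⟨a3, a4, a1, a2, by rw [add_comm]; exact a5⟩

lemma second_deriv_nonpos {f f1 : ℝ → ℝ} {s : ℝ} (hmax : IsLocalMax f 0)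
    (hf : ∀ᶠ t in nhds (0:ℝ), HasDerivAt f (f1 t) t) (hf1 : HasDerivAt f1 s 0) : s ≤ 0 := by
  by_contra hs
  push Not at hs
  have hd : deriv f =ᶠ[nhds 0] f1 := hf.mono fun t ht => ht.deriv
  have hdd : deriv (deriv f) 0 = s := by rw [hd.deriv_eq]; exact hf1.deriv
  have hmin : IsLocalMin f 0 := isLocalMin_of_deriv_deriv_pos (by rw [hdd]; exact hs)
    hmax.deriv_eq_zero hf.self_of_nhds.continuousAt
  have hc : f =ᶠ[nhds 0] fun _ => f 0 := by
    filter_upwards [hmin, hmax] with t h1 h2 using le_antisymm h2 h1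
  have hc1 : deriv f =ᶠ[nhds 0] fun _ => (0:ℝ) := by
    filter_upwards [hc.eventuallyEq_nhds] with t ht
    rw [ht.deriv_eq]; simp
  have : deriv (deriv f) 0 = 0 := by rw [hc1.deriv_eq]; simp
  linarith

/-- At an interior local maximum the Laplacian is nonpositive. -/
lemma HasLap.nonpos_of_isLocalMax {u u1 u2 L : ℂ → ℝ} {U : Set ℂ} (hU : IsOpen U)
    (h : HasLap u u1 u2 L U) {z : ℂ} (hz : z ∈ U) (hmax : IsLocalMax u z) : L z ≤ 0 := by
  obtain ⟨u11, u22, h⟩ := h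
  obtain ⟨-, a2, -, a4, a5⟩ := h z hz
  have c1 : Tendsto (fun t : ℝ => z + t) (nhds 0) (nhds z) := by
    have : Continuous fun t : ℝ => z + (t : ℂ) := by fun_prop
    simpa using this.tendsto 0
  have c2 : Tendsto (fun t : ℝ => z + t * Complex.I) (nhds 0) (nhds z) := by
    have : Continuous fun t : ℝ => z + (t : ℂ) * Complex.I := by fun_prop
    simpa using this.tendsto 0
  have shift : ∀ {g : ℂ → ℝ} {g' : ℝ} (t : ℝ) (v : ℂ),
      HasDerivAt (fun s : ℝ => g (z + t * v + s * v)) g' 0 →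
      HasDerivAt (fun s : ℝ => g (z + s * v)) g' t := by
    intro g g' t v hg
    have h0 : HasDerivAt (fun s : ℝ => s - t) 1 t := (hasDerivAt_id t).sub_const t
    have h1 : HasDerivAt (fun s : ℝ => g (z + t * v + s * v)) g' (t - t) := by simpa using hg
    have := HasDerivAt.comp (h := fun s : ℝ => s - t) t h1 h0
    rw [mul_one] at this
    refine this.congr_of_eventuallyEq (Eventually.of_forall fun s => ?_)
    simp only [Function.comp]; congr 1; push_cast; ring
  have s1 : u11 z ≤ 0 := by
    refine second_deriv_nonpos (f := fun t : ℝ => u (z + t)) (f1 := fun t : ℝ => u1 (z + t)) ?_ ?_ a2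
    · have : ∀ᶠ y in nhds z, u y ≤ u z := hmax
      simpa [IsLocalMax, IsMaxFilter] using c1.eventually this
    · filter_upwards [c1.eventually (hU.mem_nhds hz)] with t ht
      have := shift (g := u) t 1 (by simpa using (h _ ht).1)
      simpa using this
  have s2 : u22 z ≤ 0 := by
    refine second_deriv_nonpos (f := fun t : ℝ => u (z + t * Complex.I))
      (f1 := fun t : ℝ => u2 (z + t * Complex.I)) ?_ ?_ a4
    · have : ∀ᶠ y in nhds z, u y ≤ u z := hmax
      simpa [IsLocalMax, IsMaxFilter] using c2.eventually this
    · filter_upwards [c2.eventually (hU.mem_nhds hz)] with t ht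
      exact shift (g := u) t Complex.I (h _ ht).2.2.1
  linarith

/-- The closed half-square `[0,d] × [-d,d]`. -/
def halfSq (d : ℝ) : Set ℂ := {z | (0 ≤ z.re ∧ z.re ≤ d) ∧ (-d ≤ z.im ∧ z.im ≤ d)}

/-- The open half-square `(0,d) × (-d,d)`. -/
def halfSqO (d : ℝ) : Set ℂ := {z | (0 < z.re ∧ z.re < d) ∧ (-d < z.im ∧ z.im < d)}

lemma halfSq_compact (d : ℝ) : IsCompact (halfSq d) := by
  have : halfSq d = Icc 0 d ×ℂ Icc (-d) d := by
    ext z; simp [halfSq, Complex.mem_reProdIm]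
  rw [this]
  exact isCompact_Icc.reProdIm isCompact_Icc

lemma halfSqO_open (d : ℝ) : IsOpen (halfSqO d) := by
  have : halfSqO d = Ioo 0 d ×ℂ Ioo (-d) d := by
    ext z; simp [halfSqO, Complex.mem_reProdIm]
  rw [this]
  exact isOpen_Ioo.reProdIm isOpen_Ioo

/-- The barrier on the half-square. Its Laplacian is `-N`; for `M, N ≥ 0` it is nonnegative on
`halfSq d` and at least `M` on the three sides off the axis `{re = 0}`, and it is `O(re z)` on the
real segment. -/
def barrier (d M N : ℝ) (z : ℂ) : ℝ :=
  M / d ^ 2 * (z.im ^ 2 + z.re * (2 * d - z.re)) + N / 2 * (z.re * (d - z.re))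

lemma hasLap_barrier (d M N : ℝ) (U : Set ℂ) :
    HasLap (barrier d M N)
      (fun z => M / d ^ 2 * (2 * d - 2 * z.re) + N / 2 * (d - 2 * z.re))
      (fun z => M / d ^ 2 * (2 * z.im)) (fun _ => -N) U := by
  refine ⟨fun _ => M / d ^ 2 * (-2) + N / 2 * (-2), fun _ => M / d ^ 2 * 2, fun z _ => ?_⟩
  have i1 : HasDerivAt (fun t : ℝ => z.re + t) 1 0 := (hasDerivAt_id (0:ℝ)).const_add _
  have i2 : HasDerivAt (fun t : ℝ => z.im + t) 1 0 := (hasDerivAt_id (0:ℝ)).const_add _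
  simp only [barrier, Complex.add_re, Complex.add_im, Complex.mul_re, Complex.mul_im,
    Complex.ofReal_re, Complex.ofReal_im, Complex.I_re, Complex.I_im, mul_zero, mul_one,
    sub_zero, add_zero]
  refine ⟨?_, ?_, ?_, ?_, by ring⟩
  · have := (((i1.mul (i1.const_sub (2 * d))).const_add (z.im ^ 2)).const_mul (M / d ^ 2)).add
      ((i1.mul (i1.const_sub d)).const_mul (N / 2))
    refine this.congr_deriv ?_
    ring
  · have := (((i1.const_mul 2).const_sub (2 * d)).const_mul (M / d ^ 2)).add
      (((i1.const_mul 2).const_sub d).const_mul (N / 2))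
    refine this.congr_deriv ?_
    ring
  · have := ((((i2.pow 2).add_const (z.re * (2 * d - z.re))).const_mul (M / d ^ 2)).add_const
      (N / 2 * (z.re * (d - z.re))))
    refine this.congr_deriv ?_
    simp
  · have := ((i2.const_mul 2).const_mul (M / d ^ 2))
    refine this.congr_deriv ?_
    ring

/-- One-sided comparison with the barrier. -/
lemma le_barrier {v v1 v2 L : ℂ → ℝ} {d M N : ℝ} (hd : 0 < d)
    (hc : ContinuousOn v (halfSq d)) (h0 : ∀ z ∈ halfSq d, z.re = 0 → v z = 0)
    (hM : ∀ z ∈ halfSq d, v z ≤ M) (hM0 : 0 ≤ M) (hN0 : 0 ≤ N)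
    (hL : HasLap v v1 v2 L (halfSqO d)) (hN : ∀ z ∈ halfSqO d, -N < L z) {z : ℂ}
    (hz : z ∈ halfSq d) : v z ≤ barrier d M N z := by
  have hbc : Continuous (barrier d M N) := by unfold barrier; fun_prop
  obtain ⟨y, hy, hmax⟩ := (halfSq_compact d).exists_isMaxOn ⟨z, hz⟩ (hc.sub hbc.continuousOn)
  suffices v y - barrier d M N y ≤ 0 by
    have := hmax hz
    simp only [mem_ofPred_eq, Pi.sub_apply] at this
    linarith
  have hdd : 0 < d ^ 2 := by positivity
  have hb : ∀ s, d ^ 2 ≤ s → M ≤ M / d ^ 2 * s := by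
    intro s hs
    rw [div_mul_eq_mul_div, le_div_iff₀ hdd]
    exact mul_le_mul_of_nonneg_left hs hM0
  obtain ⟨⟨y1, y2⟩, y3, y4⟩ := id hy
  have hq : 0 ≤ N / 2 * (y.re * (d - y.re)) := by
    have : 0 ≤ d - y.re := by linarith
    positivity
  by_cases hyo : y ∈ halfSqO d
  · exfalso
    have hlap := hL.sub (hasLap_barrier d M N (halfSqO d))
    have hm : IsLocalMax (fun z => v z - barrier d M N z) y := by
      filter_upwards [(halfSqO_open d).mem_nhds hyo] with w hw
      exact hmax ⟨⟨hw.1.1.le, hw.1.2.le⟩, hw.2.1.le, hw.2.2.le⟩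
    have := hlap.nonpos_of_isLocalMax (halfSqO_open d) hyo hm
    have := hN y hyo
    linarith
  · by_cases e1 : y.re = 0
    · rw [h0 y hy e1]
      unfold barrier
      rw [e1]
      have : 0 ≤ M / d ^ 2 * y.im ^ 2 := by positivity
      simp only [zero_mul, add_zero, mul_zero]; linarith
    · have hM' := hM y hy
      have hsq : d ^ 2 ≤ y.im ^ 2 + y.re * (2 * d - y.re) := by
        by_cases e2 : y.re = d
        · rw [e2]; nlinarith [sq_nonneg y.im]
        · have e3 : y.im = d ∨ y.im = -d := by
            by_contra hcon
            push Not at hcon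
            exact hyo ⟨⟨lt_of_le_of_ne y1 (Ne.symm e1), lt_of_le_of_ne y2 e2⟩,
              lt_of_le_of_ne y3 (Ne.symm hcon.2), lt_of_le_of_ne y4 hcon.1⟩
          have : y.im ^ 2 = d ^ 2 := by rcases e3 with h | h <;> rw [h] <;> ring
          nlinarith
      have := hb _ hsq
      unfold barrier
      linarith

/-- Boundary Lipschitz estimate: a function vanishing on `{re = 0}` with bounded Laplacian grows at
most linearly off the axis. The barrier is compared with `± re v` and `± im v`, whence the
factor `2`. -/
lemma norm_le_of_hasLap {v v1 v2 L : ℂ → ℂ} {d M N : ℝ} (hd : 0 < d)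
    (hc : ContinuousOn v (halfSq d)) (h0 : ∀ z ∈ halfSq d, z.re = 0 → v z = 0)
    (hM : ∀ z ∈ halfSq d, ‖v z‖ ≤ M)
    (hL : HasLap v v1 v2 L (halfSqO d)) (hN : ∀ z ∈ halfSqO d, ‖L z‖ < N) {x : ℝ}
    (hx0 : 0 ≤ x) (hxd : x ≤ d) : ‖v x‖ ≤ 2 * (2 * M / d + N * d / 2) * x := by
  have hx : (x : ℂ) ∈ halfSq d := by
    refine ⟨⟨?_, ?_⟩, ?_, ?_⟩ <;> simp [hx0, hxd, hd.le]
  have hM0 : 0 ≤ M := (norm_nonneg _).trans (hM _ hx)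
  have hN0 : 0 ≤ N := by
    have hd2 : ((d / 2 : ℝ) : ℂ) ∈ halfSqO d := by
      refine ⟨⟨?_, ?_⟩, ?_, ?_⟩ <;> simp only [Complex.ofReal_re, Complex.ofReal_im] <;> linarith
    exact (norm_nonneg _).trans (hN _ hd2).le
  have key : ∀ T : ℂ →L[ℝ] ℝ, (∀ w, |T w| ≤ ‖w‖) → T (v x) ≤ (2 * M / d + N * d / 2) * x := by
    intro T hT
    have := le_barrier (v := fun z => T (v z)) (M := M) (N := N) hd
      (T.continuous.comp_continuousOn hc)
      (fun z hz hz0 => by simp [h0 z hz hz0])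
      (fun z hz => (le_abs_self _).trans ((hT _).trans (hM z hz))) hM0 hN0 (hL.clm T)
      (fun z hz => by
        have := (abs_lt.1 ((hT (L z)).trans_lt (hN z hz))).1
        exact this) hx
    refine this.trans ?_
    unfold barrier
    simp only [Complex.ofReal_im, Complex.ofReal_re]
    have e : (2 * M / d + N * d / 2) * x - (M / d ^ 2 * (0 ^ 2 + x * (2 * d - x)) +
      N / 2 * (x * (d - x))) = M / d ^ 2 * x ^ 2 + N / 2 * x ^ 2 := by
      field_simp; ring
    have : 0 ≤ M / d ^ 2 * x ^ 2 + N / 2 * x ^ 2 := by positivity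
    linarith
  have k1 := key Complex.reCLM Complex.abs_re_le_norm
  have k2 := key (-Complex.reCLM) (fun w => by simpa using Complex.abs_re_le_norm w)
  have k3 := key Complex.imCLM Complex.abs_im_le_norm
  have k4 := key (-Complex.imCLM) (fun w => by simpa using Complex.abs_im_le_norm w)
  simp at k1 k2 k3 k4
  have := Complex.norm_le_abs_re_add_abs_im (v x)
  have h1 : |(v x).re| ≤ (2 * M / d + N * d / 2) * x := abs_le.2 ⟨by linarith, k1⟩
  have h2 : |(v x).im| ≤ (2 * M / d + N * d / 2) * x := abs_le.2 ⟨by linarith, k3⟩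
  linarith

/-! ### Gradient estimates and boundary regularity in a strip -/

/-- The closed square of half-side `d` centred at `z`. -/
def csq (z : ℂ) (d : ℝ) : Set ℂ := {w | |w.re - z.re| ≤ d ∧ |w.im - z.im| ≤ d}

/-- Interior gradient estimate for the first partial derivative, obtained by applying the boundary
estimate to the odd part of `u` in the first variable. -/
lemma norm_pd1_le_of_hasLap {u u1 u2 L : ℂ → ℂ} {z : ℂ} {d M N : ℝ} (hd : 0 < d)
    (hc : ContinuousOn u (csq z d)) (hM : ∀ w ∈ csq z d, ‖u w‖ ≤ M)
    (hL : HasLap u u1 u2 L (csq z d)) (hN : ∀ w ∈ csq z d, ‖L w‖ < N) :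
    ‖u1 z‖ ≤ 4 * M / d + N * d := by
  have hzs : z ∈ csq z d := by constructor <;> simp [hd.le]
  have hM0 : 0 ≤ M := (norm_nonneg _).trans (hM z hzs)
  have hN0 : 0 ≤ N := (norm_nonneg _).trans (hN z hzs).le
  have m1 : ∀ w ∈ halfSq d, z + w ∈ csq z d := by
    rintro w ⟨⟨h1, h2⟩, h3, h4⟩
    constructor
    · simp only [Complex.add_re, add_sub_cancel_left]; exact abs_le.2 ⟨by linarith, h2⟩
    · simp only [Complex.add_im, add_sub_cancel_left]; exact abs_le.2 ⟨h3, h4⟩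
  have m2 : ∀ w ∈ halfSq d, z + -(starRingEnd ℂ w) ∈ csq z d := by
    rintro w ⟨⟨h1, h2⟩, h3, h4⟩
    constructor
    · simp only [Complex.add_re, add_sub_cancel_left, Complex.neg_re, Complex.conj_re]
      exact abs_le.2 ⟨by linarith, by linarith⟩
    · simp only [Complex.add_im, add_sub_cancel_left, Complex.neg_im, Complex.conj_im, neg_neg]
      exact abs_le.2 ⟨h3, h4⟩
  have mo : halfSqO d ⊆ halfSq d := fun w hw => ⟨⟨hw.1.1.le, hw.1.2.le⟩, hw.2.1.le, hw.2.2.le⟩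
  have hl1 := (hL.translate z).mono (V := halfSqO d) (fun w hw => m1 w (mo hw))
  have hl2 := ((hL.translate z).reflect).mono (V := halfSqO d) (fun w hw => m2 w (mo hw))
  have key : ∀ x : ℝ, 0 ≤ x → x ≤ d →
      ‖u (z + x) - u (z + -(starRingEnd ℂ (x : ℂ)))‖ ≤
        2 * (2 * (2 * M) / d + (2 * N) * d / 2) * x := by
    intro x hx0 hxd
    refine norm_le_of_hasLap (v := fun w => u (z + w) - u (z + -(starRingEnd ℂ w))) hd ?_ ?_ ?_
      (hl1.sub hl2) ?_ hx0 hxd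
    · refine ContinuousOn.sub (hc.comp (by fun_prop) m1) (hc.comp ?_ m2)
      exact Continuous.continuousOn (continuous_const.add (Complex.continuous_conj.neg))
    · intro w hw hw0
      have : -(starRingEnd ℂ w) = w := by apply Complex.ext <;> simp [hw0]
      simp [this]
    · intro w hw
      have := norm_sub_le (u (z + w)) (u (z + -(starRingEnd ℂ w)))
      linarith [hM _ (m1 w hw), hM _ (m2 w hw)]
    · intro w hw
      have := norm_sub_le (L (z + w)) (L (z + -(starRingEnd ℂ w)))
      linarith [hN _ (m1 w (mo hw)), hN _ (m2 w (mo hw))]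
  obtain ⟨u11, u22, h⟩ := hL
  have h1 := (h z hzs).1
  have hneg : HasDerivAt (fun t : ℝ => u (z + ((-t : ℝ) : ℂ))) (-u1 z) 0 := by
    have h0 : HasDerivAt (fun t : ℝ => -t) (-1) 0 := (hasDerivAt_id 0).neg
    have h1' : HasDerivAt (fun t : ℝ => u (z + t)) (u1 z) (-0) := by simpa using h1
    simpa [Function.comp_def] using HasDerivAt.scomp (h := fun t : ℝ => -t) (0:ℝ) h1' h0
  have h2 := h1.sub hneg
  have hb := h2.le_of_lip' (C := 8 * M / d + 2 * N * d) (by positivity) (by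
    filter_upwards [Icc_mem_nhds (neg_lt_zero.2 hd) hd] with t ht
    have aux : ∀ s : ℝ, 0 ≤ s → s ≤ d →
        ‖u (z + s) - u (z + ((-s : ℝ) : ℂ))‖ ≤ (8 * M / d + 2 * N * d) * s := by
      intro s hs0 hsd
      have := key s hs0 hsd
      rw [Complex.conj_ofReal] at this
      push_cast
      refine this.trans (le_of_eq ?_)
      ring
    simp only [Pi.sub_apply, neg_zero, sub_self, sub_zero]
    rcases le_total 0 t with h | h
    · rw [Real.norm_eq_abs, abs_of_nonneg h]; exact aux t h ht.2
    · rw [Real.norm_eq_abs, abs_of_nonpos h, norm_sub_rev]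
      have := aux (-t) (by linarith) (by linarith [ht.1])
      rwa [neg_neg] at this)
  have e : u1 z - -u1 z = 2 * u1 z := by ring
  rw [e, norm_mul] at hb
  have e2 : 8 * M / d = 2 * (4 * M / d) := by ring
  rw [e2] at hb
  simp at hb
  linarith

lemma norm_pd2_le_of_hasLap {u u1 u2 L : ℂ → ℂ} {z : ℂ} {d M N : ℝ} (hd : 0 < d)
    (hc : ContinuousOn u (csq z d)) (hM : ∀ w ∈ csq z d, ‖u w‖ ≤ M)
    (hL : HasLap u u1 u2 L (csq z d)) (hN : ∀ w ∈ csq z d, ‖L w‖ < N) :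
    ‖u2 z‖ ≤ 4 * M / d + N * d := by
  have hm : ∀ w ∈ csq (Complex.I * starRingEnd ℂ z) d, Complex.I * starRingEnd ℂ w ∈ csq z d := by
    rintro w ⟨h1, h2⟩
    simp at h1 h2
    constructor <;> simpa
  have hcc : Continuous fun w : ℂ => Complex.I * starRingEnd ℂ w :=
    continuous_const.mul Complex.continuous_conj
  have := norm_pd1_le_of_hasLap (z := Complex.I * starRingEnd ℂ z) hd
    (hc.comp hcc.continuousOn hm) (fun w hw => hM _ (hm w hw)) (hL.swap.mono hm)
    (fun w hw => hN _ (hm w hw))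
  have e : Complex.I * starRingEnd ℂ (Complex.I * starRingEnd ℂ z) = z := by
    simp [← mul_assoc]
  rwa [e] at this

/-- Boundary regularity in a strip: for a solution of `-Δψ = qψ` vanishing on the axis, `q` bounded
and Lipschitz, the normal derivative is bounded and the tangential derivative is `O(re z)`. -/
lemma strip_estimate {ψ ψ1 ψ2 : ℂ → ℂ} {q : ℂ → ℝ} {c k R R2 Q : ℝ} (hk : 0 < k)
    (hR : R2 < R) (hc : ContinuousOn ψ {z | (0 ≤ z.re ∧ z.re ≤ k) ∧ |z.im - c| ≤ R})
    (h0 : ∀ z : ℂ, z.re = 0 → |z.im - c| ≤ R → ψ z = 0)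
    (hL : HasLap ψ ψ1 ψ2 (fun z => -(q z * ψ z)) {z | (0 < z.re ∧ z.re < k) ∧ |z.im - c| < R})
    (hq : ∀ z, |q z| ≤ Q) (hql : ∀ z w, |q z - q w| ≤ Q * ‖z - w‖) :
    ∃ C k2 : ℝ, 0 < k2 ∧ k2 ≤ k ∧ 0 ≤ C ∧ ∀ z : ℂ, 0 < z.re → z.re < k2 → |z.im - c| < R2 →
      ‖ψ1 z‖ ≤ C ∧ ‖ψ2 z‖ ≤ C * z.re := by
  have hQ : 0 ≤ Q := (abs_nonneg _).trans (hq 0)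
  set d := min (k / 2) ((R - R2) / 4) with hd_def
  have hd : 0 < d := lt_min (by linarith) (by linarith)
  have hdk : d ≤ k / 2 := min_le_left _ _
  have hdR : d ≤ (R - R2) / 4 := min_le_right _ _
  have hcomp : IsCompact {z : ℂ | (0 ≤ z.re ∧ z.re ≤ k) ∧ |z.im - c| ≤ R} := by
    have : {z : ℂ | (0 ≤ z.re ∧ z.re ≤ k) ∧ |z.im - c| ≤ R} = Icc 0 k ×ℂ Icc (c - R) (c + R) := by
      ext z
      simp only [mem_ofPred_eq, Complex.mem_reProdIm, mem_Icc, abs_le]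
      constructor
      · rintro ⟨h1, h2, h3⟩; exact ⟨h1, by linarith, by linarith⟩
      · rintro ⟨h1, h2, h3⟩; exact ⟨h1, by linarith, by linarith⟩
    rw [this]
    exact isCompact_Icc.reProdIm isCompact_Icc
  obtain ⟨M, hM⟩ := hcomp.exists_bound_of_continuousOn hc
  by_cases hne : R2 < 0
  · exact ⟨0, k, hk, le_rfl, le_rfl, fun z _ _ h => absurd h (by have := abs_nonneg (z.im - c); linarith)⟩
  push Not at hne
  have hM0 : 0 ≤ M := (norm_nonneg _).trans (hM (c * Complex.I) (by
    simp; constructor <;> linarith))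
  have hLb : ∀ z : ℂ, ((0 ≤ z.re ∧ z.re ≤ k) ∧ |z.im - c| ≤ R) →
      ‖-((q z : ℂ) * ψ z)‖ < Q * M + 1 := by
    intro z hz
    rw [norm_neg, norm_mul, Complex.norm_real, Real.norm_eq_abs]
    have := mul_le_mul (hq z) (hM z hz) (norm_nonneg _) hQ
    linarith
  -- the barrier gives linear decay of `ψ` at the axis
  set C0 := 2 * (2 * M / d + (Q * M + 1) * d / 2) with hC0
  have hC00 : 0 ≤ C0 := by positivity
  have step1 : ∀ z : ℂ, 0 ≤ z.re → z.re ≤ d → |z.im - c| ≤ R - d → ‖ψ z‖ ≤ C0 * z.re := by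
    intro z hz0 hzd hzc
    rw [abs_le] at hzc
    have hm : ∀ w ∈ halfSq d, (0 ≤ ((z.im : ℂ) * Complex.I + w).re ∧
        ((z.im : ℂ) * Complex.I + w).re ≤ k) ∧ |((z.im : ℂ) * Complex.I + w).im - c| ≤ R := by
      rintro w ⟨⟨h1, h2⟩, h3, h4⟩
      simp only [Complex.add_re, Complex.mul_re, Complex.ofReal_re, Complex.I_re, mul_zero,
        Complex.ofReal_im, Complex.I_im, mul_one, sub_self, zero_add, Complex.add_im,
        Complex.mul_im, add_zero]
      exact ⟨⟨h1, by linarith⟩, abs_le.2 ⟨by linarith, by linarith⟩⟩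
    have hmo : ∀ w ∈ halfSqO d, (0 < ((z.im : ℂ) * Complex.I + w).re ∧
        ((z.im : ℂ) * Complex.I + w).re < k) ∧ |((z.im : ℂ) * Complex.I + w).im - c| < R := by
      rintro w ⟨⟨h1, h2⟩, h3, h4⟩
      simp only [Complex.add_re, Complex.mul_re, Complex.ofReal_re, Complex.I_re, mul_zero,
        Complex.ofReal_im, Complex.I_im, mul_one, sub_self, zero_add, Complex.add_im,
        Complex.mul_im, add_zero]
      exact ⟨⟨h1, by linarith⟩, abs_lt.2 ⟨by linarith, by linarith⟩⟩
    have := norm_le_of_hasLap (v := fun w => ψ ((z.im : ℂ) * Complex.I + w)) (M := M)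
      (N := Q * M + 1) hd (hc.comp (by fun_prop) hm)
      (fun w hw hw0 => h0 _ (by simp [hw0]) (hm w hw).2) (fun w hw => hM _ (hm w hw))
      ((hL.translate ((z.im : ℂ) * Complex.I)).mono hmo)
      (fun w hw => hLb _ (hm w ⟨⟨hw.1.1.le, hw.1.2.le⟩, hw.2.1.le, hw.2.2.le⟩)) hz0 hzd
    have e : (z.im : ℂ) * Complex.I + (z.re : ℂ) = z := by
      rw [add_comm]; exact Complex.re_add_im z
    simpa only [e] using this
  -- interior estimates on squares of side comparable to `re z` bound the gradient
  set C1 := 12 * C0 + (Q * M + 1) * d with hC1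
  have hC10 : 0 ≤ C1 := by positivity
  have step2 : ∀ z : ℂ, 0 < z.re → z.re ≤ d / 2 → |z.im - c| ≤ R - 2 * d →
      ‖ψ1 z‖ ≤ C1 ∧ ‖ψ2 z‖ ≤ C1 := by
    intro z hz0 hzd hzc
    rw [abs_le] at hzc
    have ht : 0 < z.re / 2 := by linarith
    have hm : ∀ w ∈ csq z (z.re / 2), (0 < w.re ∧ w.re ≤ 3 / 2 * z.re) ∧ |w.im - c| ≤ R - d := by
      rintro w ⟨h1, h2⟩
      rw [abs_le] at h1 h2
      exact ⟨⟨by linarith, by linarith⟩, abs_le.2 ⟨by linarith, by linarith⟩⟩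
    have hm1 : csq z (z.re / 2) ⊆ {z | (0 < z.re ∧ z.re < k) ∧ |z.im - c| < R} := by
      intro w hw
      obtain ⟨⟨h1, h2⟩, h3⟩ := hm w hw
      exact ⟨⟨h1, by linarith⟩, by linarith⟩
    have hm2 : csq z (z.re / 2) ⊆ {z | (0 ≤ z.re ∧ z.re ≤ k) ∧ |z.im - c| ≤ R} := by
      intro w hw
      obtain ⟨⟨h1, h2⟩, h3⟩ := hm1 hw
      exact ⟨⟨h1.le, h2.le⟩, h3.le⟩
    have hMb : ∀ w ∈ csq z (z.re / 2), ‖ψ w‖ ≤ C0 * (3 / 2 * z.re) := by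
      intro w hw
      obtain ⟨⟨h1, h2⟩, h3⟩ := hm w hw
      exact (step1 w h1.le (by linarith) h3).trans (mul_le_mul_of_nonneg_left h2 hC00)
    have hfin : 4 * (C0 * (3 / 2 * z.re)) / (z.re / 2) + (Q * M + 1) * (z.re / 2) ≤ C1 := by
      have e : 4 * (C0 * (3 / 2 * z.re)) / (z.re / 2) = 12 * C0 := by field_simp; ring
      rw [e, hC1]
      have : (Q * M + 1) * (z.re / 2) ≤ (Q * M + 1) * d :=
        mul_le_mul_of_nonneg_left (by linarith) (by positivity)
      linarith
    exact ⟨(norm_pd1_le_of_hasLap ht (hc.mono hm2) hMb (hL.mono hm1)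
        (fun w hw => hLb w (hm2 hw))).trans hfin,
      (norm_pd2_le_of_hasLap ht (hc.mono hm2) hMb (hL.mono hm1)
        (fun w hw => hLb w (hm2 hw))).trans hfin⟩
  -- tangential differences vanish on the axis and have Laplacian `O(|h|)`, so the barrier
  -- applies to them too
  have step3a : ∀ (z : ℂ) (h : ℝ), 0 ≤ z.re → z.re ≤ d / 2 → |z.im - c| ≤ R - 3 * d → |h| ≤ d →
      ‖ψ (z + h * Complex.I) - ψ z‖ ≤ C1 * |h| := by
    intro z h hz0 hzd hzc hh
    rw [abs_le] at hzc hh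
    rcases hz0.eq_or_lt with hz0 | hz0
    · rw [h0 z hz0.symm (abs_le.2 ⟨by linarith, by linarith⟩),
        h0 _ (by simp [← hz0]) (by simp; exact abs_le.2 ⟨by linarith, by linarith⟩)]
      simp; positivity
    · obtain ⟨u11, u22, hD⟩ := hL
      have hder : ∀ t ∈ Icc (-d) d, HasDerivWithinAt (fun s : ℝ => ψ (z + s * Complex.I))
          (ψ2 (z + t * Complex.I)) (Icc (-d) d) t := by
        intro t ht
        have := (hD (z + t * Complex.I) ⟨⟨by simpa using hz0, by simp; linarith⟩, by
          simp; exact abs_lt.2 ⟨by linarith [ht.1], by linarith [ht.2]⟩⟩).2.2.1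
        have i0 : HasDerivAt (fun s : ℝ => s - t) 1 t := (hasDerivAt_id t).sub_const t
        have i1 : HasDerivAt (fun s : ℝ => ψ (z + t * Complex.I + s * Complex.I))
          (ψ2 (z + t * Complex.I)) (t - t) := by simpa using this
        have i2 := HasDerivAt.scomp (h := fun s : ℝ => s - t) t i1 i0
        rw [one_smul] at i2
        refine (i2.congr_of_eventuallyEq (Eventually.of_forall fun s => ?_)).hasDerivWithinAt
        simp only [Function.comp]; congr 1; push_cast; ring
      have := (convex_Icc (-d) d).norm_image_sub_le_of_norm_hasDerivWithin_le (C := C1) hder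
        (fun t ht => (step2 _ (by simpa using hz0) (by simpa using hzd) (by
          simp; exact abs_le.2 ⟨by linarith [ht.1], by linarith [ht.2]⟩)).2)
        (x := 0) (y := h) ⟨by linarith, hd.le⟩ hh
      simpa using this
  set C2 := 2 * (2 * C1 / (d / 2) + (Q * M + Q * C1 + 1) * (d / 2) / 2) with hC2
  have hC20 : 0 ≤ C2 := by positivity
  have step3 : ∀ (z : ℂ) (h : ℝ), 0 < z.re → z.re ≤ d / 2 → |z.im - c| ≤ R - 4 * d → |h| ≤ d →
      ‖ψ (z + h * Complex.I) - ψ z‖ ≤ C2 * z.re * |h| := by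
    intro z h hz0 hzd hzc hh
    rcases eq_or_ne h 0 with hh0 | hh0
    · simp [hh0]
    have hhp : 0 < |h| := abs_pos.2 hh0
    have hh' := abs_le.1 hh
    rw [abs_le] at hzc
    have hm : ∀ w ∈ halfSq (d / 2), (0 ≤ ((z.im : ℂ) * Complex.I + w).re ∧
        ((z.im : ℂ) * Complex.I + w).re ≤ d / 2) ∧
        |((z.im : ℂ) * Complex.I + w).im - c| ≤ R - 3 * d := by
      rintro w ⟨⟨h1, h2⟩, h3, h4⟩
      simp only [Complex.add_re, Complex.mul_re, Complex.ofReal_re, Complex.I_re, mul_zero,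
        Complex.ofReal_im, Complex.I_im, mul_one, sub_self, zero_add, Complex.add_im,
        Complex.mul_im, add_zero]
      exact ⟨⟨h1, by linarith⟩, abs_le.2 ⟨by linarith, by linarith⟩⟩
    have hm1 : ∀ w ∈ halfSq (d / 2), (z.im : ℂ) * Complex.I + w ∈
        {z : ℂ | (0 ≤ z.re ∧ z.re ≤ k) ∧ |z.im - c| ≤ R} := by
      intro w hw
      obtain ⟨⟨h1, h2⟩, h3⟩ := hm w hw
      exact ⟨⟨h1, by linarith⟩, by linarith⟩
    have hm2 : ∀ w ∈ halfSq (d / 2), (z.im : ℂ) * Complex.I + h * Complex.I + w ∈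
        {z : ℂ | (0 ≤ z.re ∧ z.re ≤ k) ∧ |z.im - c| ≤ R} := by
      rintro w ⟨⟨h1, h2⟩, h3, h4⟩
      simp only [mem_ofPred_eq, Complex.add_re, Complex.mul_re, Complex.ofReal_re, Complex.I_re,
        mul_zero, Complex.ofReal_im, Complex.I_im, mul_one, sub_self, zero_add, Complex.add_im,
        Complex.mul_im, add_zero]
      exact ⟨⟨h1, by linarith⟩, abs_le.2 ⟨by linarith, by linarith⟩⟩
    have mo : ∀ w ∈ halfSqO (d / 2), w ∈ halfSq (d / 2) :=
      fun w hw => ⟨⟨hw.1.1.le, hw.1.2.le⟩, hw.2.1.le, hw.2.2.le⟩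
    have hmo1 : ∀ w ∈ halfSqO (d / 2), (z.im : ℂ) * Complex.I + w ∈
        {z : ℂ | (0 < z.re ∧ z.re < k) ∧ |z.im - c| < R} := by
      intro w hw
      obtain ⟨⟨h1, h2⟩, h3⟩ := hm w (mo w hw)
      exact ⟨⟨by simpa using hw.1.1, by linarith⟩, by linarith⟩
    have hmo2 : ∀ w ∈ halfSqO (d / 2), (z.im : ℂ) * Complex.I + h * Complex.I + w ∈
        {z : ℂ | (0 < z.re ∧ z.re < k) ∧ |z.im - c| < R} := by
      rintro w ⟨⟨h1, h2⟩, h3, h4⟩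
      simp only [mem_ofPred_eq, Complex.add_re, Complex.mul_re, Complex.ofReal_re, Complex.I_re,
        mul_zero, Complex.ofReal_im, Complex.I_im, mul_one, sub_self, zero_add, Complex.add_im,
        Complex.mul_im, add_zero]
      exact ⟨⟨h1, by linarith⟩, abs_lt.2 ⟨by linarith, by linarith⟩⟩
    have hdiff : ∀ w ∈ halfSq (d / 2), ‖ψ ((z.im : ℂ) * Complex.I + h * Complex.I + w) -
        ψ ((z.im : ℂ) * Complex.I + w)‖ ≤ C1 * |h| := by
      intro w hw
      obtain ⟨⟨h1, h2⟩, h3⟩ := hm w hw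
      have := step3a _ h h1 h2 h3 hh
      rwa [add_right_comm] at this
    have := norm_le_of_hasLap (v := fun w => ψ ((z.im : ℂ) * Complex.I + h * Complex.I + w) -
        ψ ((z.im : ℂ) * Complex.I + w)) (M := C1 * |h|)
      (N := (Q * M + Q * C1 + 1) * |h|) (half_pos hd)
      ((hc.comp (by fun_prop) hm2).sub (hc.comp (by fun_prop) hm1))
      (fun w hw hw0 => by
        rw [h0 _ (by simp [hw0]) (hm2 w hw).2, h0 _ (by simp [hw0]) (hm1 w hw).2, sub_zero])
      hdiff
      (((hL.translate ((z.im : ℂ) * Complex.I + h * Complex.I)).mono hmo2).sub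
        ((hL.translate ((z.im : ℂ) * Complex.I)).mono hmo1))
      (fun w hw => by
        set x := (z.im : ℂ) * Complex.I + w with hx
        set y := (z.im : ℂ) * Complex.I + h * Complex.I + w with hy
        have hyx : y - x = h * Complex.I := by rw [hx, hy]; ring
        have e : -((q y : ℂ) * ψ y) - -((q x : ℂ) * ψ x) =
            -(((q y - q x : ℝ) : ℂ) * ψ y) - (q x : ℂ) * (ψ y - ψ x) := by push_cast; ring
        rw [e]
        have n1 : |q y - q x| ≤ Q * |h| := by
          have := hql y x
          rw [hyx] at this
          simpa using this
        have n2 : ‖-(((q y - q x : ℝ) : ℂ) * ψ y)‖ ≤ Q * |h| * M := by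
          rw [norm_neg, norm_mul, Complex.norm_real, Real.norm_eq_abs]
          exact mul_le_mul n1 (hM _ (hm2 w (mo w hw))) (norm_nonneg _) (by positivity)
        have n3 : ‖(q x : ℂ) * (ψ y - ψ x)‖ ≤ Q * (C1 * |h|) := by
          rw [norm_mul, Complex.norm_real, Real.norm_eq_abs]
          exact mul_le_mul (hq x) (hdiff w (mo w hw)) (norm_nonneg _) hQ
        have := norm_sub_le (-(((q y - q x : ℝ) : ℂ) * ψ y)) ((q x : ℂ) * (ψ y - ψ x))
        nlinarith) hz0.le hzd
    have e : (z.im : ℂ) * Complex.I + (z.re : ℂ) = z := by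
      rw [add_comm]; exact Complex.re_add_im z
    have e' : (z.im : ℂ) * Complex.I + h * Complex.I + (z.re : ℂ) = z + h * Complex.I := by
      rw [add_right_comm, e]
    simp only [e, e'] at this
    refine this.trans (le_of_eq ?_)
    rw [hC2]; ring
  refine ⟨max C1 C2, d / 2, half_pos hd, by linarith, le_max_of_le_left hC10, ?_⟩
  intro z hz0 hzd hzc
  refine ⟨(step2 z hz0 hzd.le (by linarith)).1.trans (le_max_left _ _), ?_⟩
  refine le_trans ?_ (mul_le_mul_of_nonneg_right (le_max_right C1 C2) hz0.le)
  obtain ⟨u11, u22, hD⟩ := hL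
  have hder := (hD z ⟨⟨hz0, by linarith⟩, by linarith⟩).2.2.1
  refine hder.le_of_lip' (by positivity) ?_
  filter_upwards [Icc_mem_nhds (neg_lt_zero.2 hd) hd] with t ht
  simpa using step3 z t hz0 hzd.le (by linarith) (abs_le.2 ht)

/-! ### The Aharonov–Bohm potential, the magnetic gradient and the gauge -/

lemma abPot_eq (a x : ℂ) : abPot a x = starRingEnd ℂ (-Complex.I / (2 * (x - a))) := by
  unfold abPot
  rcases eq_or_ne x a with h | h
  · simp [h]
  have h1 : x - a ≠ 0 := sub_ne_zero.2 h
  have h2 : starRingEnd ℂ (x - a) ≠ 0 := (map_ne_zero _).2 h1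
  have h3 : ((‖x - a‖ : ℂ)) ^ 2 = (x - a) * starRingEnd ℂ (x - a) := by
    rw [Complex.mul_conj, Complex.normSq_eq_norm_sq]; push_cast; ring
  rw [h3, map_div₀, map_mul, map_neg, Complex.conj_I]
  simp only [Complex.conj_ofNat, neg_neg]
  field_simp

/-- The complex derivative of the holomorphic function `x ↦ -i / (2 (x - a))`, whose conjugate is
the Aharonov–Bohm potential. -/
def abD (a x : ℂ) : ℂ := Complex.I / (2 * (x - a) ^ 2)

lemma hasDerivAt_abPot_conj {a x : ℂ} (h : x ≠ a) :
    HasDerivAt (fun y => -Complex.I / (2 * (y - a))) (abD a x) x := by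
  have h1 : x - a ≠ 0 := sub_ne_zero.2 h
  have := (((hasDerivAt_id x).sub_const a).const_mul 2).inv (by simpa using h1)
  have := this.const_mul (-Complex.I)
  simp only [id] at this
  refine (this.congr_deriv ?_)
  unfold abD; field_simp

lemma hasFDerivAt_abPot1 {a x : ℂ} (h : x ≠ a) : HasFDerivAt (abPot1 a)
    (Complex.reCLM.comp ((ContinuousLinearMap.toSpanSingleton ℂ (abD a x)).restrictScalars ℝ)) x := by
  have := Complex.reCLM.hasFDerivAt.comp x
    ((hasDerivAt_abPot_conj h).hasFDerivAt.restrictScalars ℝ)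
  refine this.congr_of_eventuallyEq (Eventually.of_forall fun y => ?_)
  simp only [abPot1, abPot_eq, Complex.conj_re]; rfl

lemma hasFDerivAt_abPot2 {a x : ℂ} (h : x ≠ a) : HasFDerivAt (abPot2 a)
    (-Complex.imCLM.comp ((ContinuousLinearMap.toSpanSingleton ℂ (abD a x)).restrictScalars ℝ)) x := by
  have := (Complex.imCLM.hasFDerivAt.comp x
    ((hasDerivAt_abPot_conj h).hasFDerivAt.restrictScalars ℝ)).neg
  refine this.congr_of_eventuallyEq (Eventually.of_forall fun y => ?_)
  simp only [abPot2, abPot_eq, Complex.conj_im]; rfl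

/-- The Aharonov–Bohm potential is curl-free away from the pole. -/
lemma abPot_curl {a x : ℂ} (h : x ≠ a) :
    fderiv ℝ (abPot2 a) x 1 = fderiv ℝ (abPot1 a) x Complex.I := by
  rw [(hasFDerivAt_abPot1 h).fderiv, (hasFDerivAt_abPot2 h).fderiv]
  simp

lemma hasFDerivAt_pd {φ : ℂ → ℂ} {x : ℂ} (h : ContDiffAt ℝ 2 φ x) (v : ℂ) :
    HasFDerivAt (fun y => fderiv ℝ φ y v) ((fderiv ℝ (fderiv ℝ φ) x).flip v) x := by
  have h1 : DifferentiableAt ℝ (fderiv ℝ φ) x :=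
    (h.fderiv_right (m := 1) (by norm_num)).differentiableAt (by norm_num)
  have := h1.hasFDerivAt.clm_apply (hasFDerivAt_const v x)
  simpa using this

lemma differentiableAt_mg1 {a x : ℂ} {φ : ℂ → ℂ} (hx : x ≠ a) (h : ContDiffAt ℝ 2 φ x) :
    DifferentiableAt ℝ (mg1 a φ) x := by
  have h1 : DifferentiableAt ℝ (pd1 φ) x := (hasFDerivAt_pd h 1).differentiableAt
  have h2 : DifferentiableAt ℝ (fun y => (abPot1 a y : ℂ)) x :=
    Complex.ofRealCLM.differentiableAt.comp x (hasFDerivAt_abPot1 hx).differentiableAt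
  have h3 : DifferentiableAt ℝ φ x := h.differentiableAt (by norm_num)
  exact (h1.const_mul _).add (h2.mul h3)

lemma differentiableAt_mg2 {a x : ℂ} {φ : ℂ → ℂ} (hx : x ≠ a) (h : ContDiffAt ℝ 2 φ x) :
    DifferentiableAt ℝ (mg2 a φ) x := by
  have h1 : DifferentiableAt ℝ (pd2 φ) x := (hasFDerivAt_pd h Complex.I).differentiableAt
  have h2 : DifferentiableAt ℝ (fun y => (abPot2 a y : ℂ)) x :=
    Complex.ofRealCLM.differentiableAt.comp x (hasFDerivAt_abPot2 hx).differentiableAt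
  have h3 : DifferentiableAt ℝ φ x := h.differentiableAt (by norm_num)
  exact (h1.const_mul _).add (h2.mul h3)

lemma fderiv_mg1 {a x : ℂ} {φ : ℂ → ℂ} (hx : x ≠ a) (h : ContDiffAt ℝ 2 φ x) (v : ℂ) :
    fderiv ℝ (mg1 a φ) x v = Complex.I * fderiv ℝ (fderiv ℝ φ) x v 1 +
      (fderiv ℝ (abPot1 a) x v : ℂ) * φ x + (abPot1 a x : ℂ) * fderiv ℝ φ x v := by
  have h1 := (hasFDerivAt_pd h 1).const_mul Complex.I
  have h2 := Complex.ofRealCLM.hasFDerivAt.comp x (hasFDerivAt_abPot1 hx).differentiableAt.hasFDerivAt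
  have h3 := (h.differentiableAt (by norm_num)).hasFDerivAt
  have := (h1.add (h2.mul h3)).fderiv
  have e : mg1 a φ = ((fun y => Complex.I * fderiv ℝ φ y 1) +
    (⇑Complex.ofRealCLM ∘ abPot1 a) * φ) := rfl
  rw [e, this]
  simp
  ring

lemma fderiv_mg2 {a x : ℂ} {φ : ℂ → ℂ} (hx : x ≠ a) (h : ContDiffAt ℝ 2 φ x) (v : ℂ) :
    fderiv ℝ (mg2 a φ) x v = Complex.I * fderiv ℝ (fderiv ℝ φ) x v Complex.I +
      (fderiv ℝ (abPot2 a) x v : ℂ) * φ x + (abPot2 a x : ℂ) * fderiv ℝ φ x v := by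
  have h1 := (hasFDerivAt_pd h Complex.I).const_mul Complex.I
  have h2 := Complex.ofRealCLM.hasFDerivAt.comp x (hasFDerivAt_abPot2 hx).differentiableAt.hasFDerivAt
  have h3 := (h.differentiableAt (by norm_num)).hasFDerivAt
  have := (h1.add (h2.mul h3)).fderiv
  have e : mg2 a φ = ((fun y => Complex.I * fderiv ℝ φ y Complex.I) +
    (⇑Complex.ofRealCLM ∘ abPot2 a) * φ) := rfl
  rw [e, this]
  simp
  ring

/-- `(i∇ + A)·(i∇ + A)φ` is the magnetic Laplacian. -/
lemma mg_div {a x : ℂ} {φ : ℂ → ℂ} (hx : x ≠ a) (h : ContDiffAt ℝ 2 φ x) :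
    Complex.I * (fderiv ℝ (mg1 a φ) x 1 + fderiv ℝ (mg2 a φ) x Complex.I) +
      abPot1 a x * mg1 a φ x + abPot2 a x * mg2 a φ x = magLap a φ x := by
  rw [fderiv_mg1 hx h, fderiv_mg2 hx h]
  have l1 : fderiv ℝ (fun y => pd1 φ y) x 1 = fderiv ℝ (fderiv ℝ φ) x 1 1 := by
    have := (hasFDerivAt_pd h 1).fderiv
    unfold pd1
    rw [this]; rfl
  have l2 : fderiv ℝ (fun y => pd2 φ y) x Complex.I =
      fderiv ℝ (fderiv ℝ φ) x Complex.I Complex.I := by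
    have := (hasFDerivAt_pd h Complex.I).fderiv
    unfold pd2
    rw [this]; rfl
  unfold magLap lapC divAB mg1 mg2
  rw [l1, l2]
  unfold pd1 pd2
  push_cast
  linear_combination (fderiv ℝ (fderiv ℝ φ) x 1 1 +
    fderiv ℝ (fderiv ℝ φ) x Complex.I Complex.I) * Complex.I_mul_I

/-- The magnetic gradient has vanishing magnetic curl. -/
lemma mg_curl {a x : ℂ} {φ : ℂ → ℂ} (hx : x ≠ a) (h : ContDiffAt ℝ 2 φ x) :
    Complex.I * (fderiv ℝ (mg2 a φ) x 1 - fderiv ℝ (mg1 a φ) x Complex.I) +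
      abPot1 a x * mg2 a φ x - abPot2 a x * mg1 a φ x = 0 := by
  rw [fderiv_mg1 hx h, fderiv_mg2 hx h, abPot_curl hx]
  have hs : fderiv ℝ (fderiv ℝ φ) x 1 Complex.I = fderiv ℝ (fderiv ℝ φ) x Complex.I 1 :=
    (h.isSymmSndFDerivAt (by simp)).eq 1 Complex.I
  rw [hs]
  unfold mg1 mg2 pd1 pd2
  ring

/-- The gauge factor `exp(-(i/2) arg(a - x))`, smooth on `{x₁ < a₁}`. -/
def abGauge (a x : ℂ) : ℂ := Complex.exp (-(Complex.I / 2) * ((Complex.log (a - x)).im : ℂ))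

lemma norm_gauge (a x : ℂ) : ‖abGauge a x‖ = 1 := by
  unfold abGauge
  rw [Complex.norm_exp]
  simp

lemma hasFDerivAt_gauge {a x : ℂ} (h : x.re < a.re) :
    ∃ G' : ℂ →L[ℝ] ℂ, HasFDerivAt (abGauge a) G' x ∧
      G' 1 = -Complex.I * abPot1 a x * abGauge a x ∧
      G' Complex.I = -Complex.I * abPot2 a x * abGauge a x := by
  have hs : a - x ∈ Complex.slitPlane := by left; simpa using h
  have hne : x - a ≠ 0 := by
    intro h0; rw [sub_eq_zero] at h0; rw [h0] at h; exact lt_irrefl _ h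
  have h1 : HasDerivAt (fun y => Complex.log (a - y)) ((x - a)⁻¹) x := by
    have := ((hasDerivAt_id x).const_sub a).clog hs
    refine this.congr_deriv ?_
    rw [id, ← neg_sub x a, neg_div_neg_eq, one_div]
  have h2 := Complex.ofRealCLM.hasFDerivAt.comp x
    (Complex.imCLM.hasFDerivAt.comp x (h1.hasFDerivAt.restrictScalars ℝ))
  have h3 := (h2.const_mul (-(Complex.I / 2))).cexp
  refine ⟨_, h3, ?_, ?_⟩
  · have : ((abPot1 a x : ℝ) : ℂ) = 1 / 2 * (((x - a)⁻¹).im : ℂ) := by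
      unfold abPot1
      rw [abPot_eq]
      rw [Complex.conj_re]
      have : -Complex.I / (2 * (x - a)) = ((1 / 2 : ℝ) : ℂ) * (-Complex.I * (x - a)⁻¹) := by
        push_cast; field_simp
      rw [this, Complex.re_ofReal_mul]
      simp
    rw [this]
    simp [abGauge]
    ring
  · have : ((abPot2 a x : ℝ) : ℂ) = 1 / 2 * (((x - a)⁻¹).re : ℂ) := by
      unfold abPot2
      rw [abPot_eq]
      rw [Complex.conj_im]
      have : -Complex.I / (2 * (x - a)) = ((1 / 2 : ℝ) : ℂ) * (-Complex.I * (x - a)⁻¹) := by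
        push_cast; field_simp
      rw [this, Complex.im_ofReal_mul]
      simp
    rw [this]
    simp [abGauge]
    ring

lemma HasFDerivAt.lineRe {g : ℂ → ℂ} {g' : ℂ →L[ℝ] ℂ} {z : ℂ} (h : HasFDerivAt g g' z) :
    HasDerivAt (fun t : ℝ => g (z + t)) (g' 1) 0 := by
  have h0 : HasDerivAt (fun t : ℝ => z + (t : ℂ)) 1 0 :=
    (Complex.ofRealCLM.hasDerivAt (x := (0:ℝ))).const_add z
  have h' : HasFDerivAt g g' (z + ((0:ℝ) : ℂ)) := by simpa using h
  exact h'.comp_hasDerivAt (0:ℝ) h0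

lemma HasFDerivAt.lineIm {g : ℂ → ℂ} {g' : ℂ →L[ℝ] ℂ} {z : ℂ} (h : HasFDerivAt g g' z) :
    HasDerivAt (fun t : ℝ => g (z + t * Complex.I)) (g' Complex.I) 0 := by
  have h0 : HasDerivAt (fun t : ℝ => z + (t : ℂ) * Complex.I) Complex.I 0 := by
    have := ((Complex.ofRealCLM.hasDerivAt (x := (0:ℝ))).mul_const Complex.I).const_add z
    simpa using this
  have h' : HasFDerivAt g g' (z + ((0:ℝ) : ℂ) * Complex.I) := by simpa using h
  exact h'.comp_hasDerivAt (0:ℝ) h0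

/-- In the gauge `abGauge`, the magnetic Laplacian becomes the Laplacian, and the magnetic gradient
the gradient, up to factors of modulus one. -/
lemma hasLap_gauge {a : ℂ} {φ f : ℂ → ℂ} {U : Set ℂ} (hU : ∀ x ∈ U, x.re < a.re)
    (h : ∀ x ∈ U, ContDiffAt ℝ 2 φ x) (heq : ∀ x ∈ U, magLap a φ x = f x) :
    HasLap (fun x => abGauge a x * φ x) (fun x => -Complex.I * abGauge a x * mg1 a φ x)
      (fun x => -Complex.I * abGauge a x * mg2 a φ x) (fun x => -(abGauge a x * f x)) U := by
  refine ⟨fun x => fderiv ℝ (fun x => -Complex.I * abGauge a x * mg1 a φ x) x 1,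
    fun x => fderiv ℝ (fun x => -Complex.I * abGauge a x * mg2 a φ x) x Complex.I, fun x hx => ?_⟩
  obtain ⟨G', hG, hG1, hG2⟩ := hasFDerivAt_gauge (hU x hx)
  have hne : x ≠ a := by
    intro h0; have := hU x hx; rw [h0] at this; exact lt_irrefl _ this
  have hφ := ((h x hx).differentiableAt (by norm_num)).hasFDerivAt
  have d1 := (differentiableAt_mg1 hne (h x hx)).hasFDerivAt
  have d2 := (differentiableAt_mg2 hne (h x hx)).hasFDerivAt
  have p1 := (hG.const_mul (-Complex.I)).mul d1
  have p2 := (hG.const_mul (-Complex.I)).mul d2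
  refine ⟨?_, ?_, ?_, ?_, ?_⟩
  · refine (hG.mul hφ).lineRe.congr_deriv ?_
    simp [hG1, mg1, pd1]
    linear_combination ((abGauge a x * fderiv ℝ φ x 1)) * Complex.I_mul_I
  · exact p1.differentiableAt.hasFDerivAt.lineRe
  · refine (hG.mul hφ).lineIm.congr_deriv ?_
    simp [hG2, mg2, pd2]
    linear_combination ((abGauge a x * fderiv ℝ φ x Complex.I)) * Complex.I_mul_I
  · exact p2.differentiableAt.hasFDerivAt.lineIm
  · have e1 : (fun x => -Complex.I * abGauge a x * mg1 a φ x) =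
      (fun y => -Complex.I * abGauge a y) * (mg1 a φ) := rfl
    have e2 : (fun x => -Complex.I * abGauge a x * mg2 a φ x) =
      (fun y => -Complex.I * abGauge a y) * (mg2 a φ) := rfl
    simp only [e1, e2, p1.fderiv, p2.fderiv]
    rw [← heq x hx, ← mg_div hne (h x hx)]
    simp [hG1, hG2]
    linear_combination (abGauge a x * (abPot1 a x * mg1 a φ x + abPot2 a x * mg2 a φ x)) *
      Complex.I_mul_I

/-! ### Magnetic eigenfunctions and the Pohozaev field -/

/-- `φ` is a magnetic eigenfunction on the half-disk `D_{r₀}⁺(π(a))` with pole `a`, continuous up to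
the boundary and zero on the axis. The field `hq` says that `λp` is bounded and Lipschitz. -/
structure Sol (a : ℂ) (lam r₀ : ℝ) (p : ℂ → ℝ) (φ : ℂ → ℂ) : Prop where
  ha : 0 < a.re
  hp : ContDiff ℝ 1 p
  hq : ∃ Q : ℝ, (∀ z, |lam * p z| ≤ Q) ∧ ∀ z w, |lam * p z - lam * p w| ≤ Q * ‖z - w‖
  hcont : ContinuousOn φ (closure (halfDisk (proj a) r₀))
  hbc : ∀ x ∈ closure (halfDisk (proj a) r₀), x.re = 0 → φ x = 0
  hC2 : ContDiffOn ℝ 2 φ (halfDisk (proj a) r₀ \ {a})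
  heq : ∀ x ∈ halfDisk (proj a) r₀ \ {a}, magLap a φ x = ((lam * p x : ℝ) : ℂ) * φ x

lemma isOpen_halfDisk (c : ℂ) (r : ℝ) : IsOpen (halfDisk c r) := by
  have : halfDisk c r = Metric.ball c r ∩ {x | 0 < x.re} := rfl
  rw [this]
  exact Metric.isOpen_ball.inter (isOpen_lt continuous_const Complex.continuous_re)

lemma halfDisk_mono (c : ℂ) {r s : ℝ} (h : r ≤ s) : halfDisk c r ⊆ halfDisk c s :=
  fun _ hx => ⟨hx.1.trans_le h, hx.2⟩

lemma isCompact_closure_halfDisk (c : ℂ) (r : ℝ) : IsCompact (closure (halfDisk c r)) := by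
  have : Bornology.IsBounded (halfDisk c r) :=
    Metric.isBounded_ball.subset (fun x hx => (hx.1 : x ∈ Metric.ball c r))
  exact this.isCompact_closure

@[simp] lemma proj_re (a : ℂ) : (proj a).re = 0 := by simp [proj]
@[simp] lemma proj_im (a : ℂ) : (proj a).im = a.im := by simp [proj]

lemma mem_closure_halfDisk {c x : ℂ} {r : ℝ} (h : dist x c < r) (hx : 0 ≤ x.re) :
    x ∈ closure (halfDisk c r) := by
  have h1 : Tendsto (fun t : ℝ => x + (t : ℂ)) (nhdsWithin 0 (Ioi 0)) (nhds x) := by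
    have : Continuous fun t : ℝ => x + (t : ℂ) := by fun_prop
    have := this.tendsto 0
    simp only [Complex.ofReal_zero, add_zero] at this
    exact this.mono_left nhdsWithin_le_nhds
  refine mem_closure_of_tendsto h1 ?_
  have h2 : ∀ᶠ y in nhds x, dist y c < r := (Metric.isOpen_ball.mem_nhds h :)
  filter_upwards [h1.eventually h2, self_mem_nhdsWithin] with t ht ht0
  have ht0' : (0:ℝ) < t := ht0
  exact ⟨ht, by simp; linarith⟩

namespace Sol
variable {a : ℂ} {lam r₀ : ℝ} {p : ℂ → ℝ} {φ : ℂ → ℂ}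

lemma contDiffAt (S : Sol a lam r₀ p φ) {x : ℂ} (hx : x ∈ halfDisk (proj a) r₀) (hxa : x ≠ a) :
    ContDiffAt ℝ 2 φ x :=
  S.hC2.contDiffAt (((isOpen_halfDisk _ _).sdiff isClosed_singleton).mem_nhds ⟨hx, hxa⟩)

lemma bound_phi (S : Sol a lam r₀ p φ) :
    ∃ B : ℝ, 0 ≤ B ∧ ∀ x ∈ halfDisk (proj a) r₀, ‖φ x‖ ≤ B := by
  obtain ⟨B, hB⟩ := (isCompact_closure_halfDisk _ _).exists_bound_of_continuousOn S.hcont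
  exact ⟨max B 0, le_max_right _ _,
    fun x hx => (hB x (subset_closure hx)).trans (le_max_left _ _)⟩

/-- Near the flat boundary the magnetic gradient is bounded, and its tangential component is
controlled by the distance to the boundary. -/
lemma near_bdry (S : Sol a lam r₀ p φ) {R : ℝ} (hR : R < r₀) :
    ∃ C k : ℝ, 0 < k ∧ k ≤ a.re / 2 ∧ 0 ≤ C ∧ ∀ x ∈ halfDisk (proj a) R, x.re < k →
      ‖mg1 a φ x‖ ≤ C ∧ ‖mg2 a φ x‖ ≤ C * x.re := by
  obtain ⟨Q, hQ1, hQ2⟩ := S.hq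
  have ha := S.ha
  set R' := (R + r₀) / 2 with hR'
  set k0 := min ((r₀ - R') / 2) (a.re / 2) with hk0
  have hk0p : 0 < k0 := lt_min (by linarith) (by linarith)
  have hk1 : k0 ≤ (r₀ - R') / 2 := min_le_left _ _
  have hk2 : k0 ≤ a.re / 2 := min_le_right _ _
  have hdist : ∀ z : ℂ, 0 ≤ z.re → z.re ≤ k0 → |z.im - a.im| ≤ R' → dist z (proj a) < r₀ := by
    intro z h1 h2 h3
    rw [dist_eq_norm]
    have := Complex.norm_le_abs_re_add_abs_im (z - proj a)
    simp only [Complex.sub_re, proj_re, sub_zero, Complex.sub_im, proj_im, abs_of_nonneg h1] at this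
    linarith
  have hcl : ∀ z : ℂ, ((0 ≤ z.re ∧ z.re ≤ k0) ∧ |z.im - a.im| ≤ R') →
      z ∈ closure (halfDisk (proj a) r₀) :=
    fun z hz => mem_closure_halfDisk (hdist z hz.1.1 hz.1.2 hz.2) hz.1.1
  have hop : ∀ z : ℂ, ((0 < z.re ∧ z.re < k0) ∧ |z.im - a.im| < R') →
      z ∈ halfDisk (proj a) r₀ \ {a} := by
    intro z hz
    refine ⟨⟨hdist z hz.1.1.le hz.1.2.le hz.2.le, hz.1.1⟩, ?_⟩
    rintro rfl
    linarith [hz.1.2]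
  have hgc : ContinuousOn (abGauge a) {z | (0 ≤ z.re ∧ z.re ≤ k0) ∧ |z.im - a.im| ≤ R'} := by
    intro z hz
    obtain ⟨G', hG, -⟩ := hasFDerivAt_gauge (a := a) (x := z) (by linarith [hz.1.2])
    exact hG.continuousAt.continuousWithinAt
  have hlap := hasLap_gauge (a := a) (φ := φ) (f := fun x => ((lam * p x : ℝ) : ℂ) * φ x)
    (U := {z | (0 < z.re ∧ z.re < k0) ∧ |z.im - a.im| < R'})
    (fun _ hx => by linarith [hx.1.2]) (fun x hx => S.contDiffAt (hop x hx).1 (hop x hx).2)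
    (fun x hx => S.heq x (hop x hx))
  have e : (fun x => -(abGauge a x * (((lam * p x : ℝ) : ℂ) * φ x))) =
      fun x => -(((lam * p x : ℝ) : ℂ) * (abGauge a x * φ x)) := by
    funext x; ring
  rw [e] at hlap
  obtain ⟨C, k, hk, hkk, hC, hest⟩ := strip_estimate (q := fun x => lam * p x) (R2 := R) hk0p
    (by linarith) (hgc.mul (S.hcont.mono hcl))
    (fun z hz hz' => by
      change abGauge a z * φ z = 0
      rw [S.hbc z (hcl z ⟨⟨hz.ge, by linarith⟩, hz'⟩) hz, mul_zero]) hlap hQ1 hQ2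
  refine ⟨C, k, hk, by linarith, hC, fun x hx hxk => ?_⟩
  have him : |x.im - a.im| < R := by
    have := Complex.abs_im_le_norm (x - proj a)
    rw [Complex.sub_im, proj_im, ← dist_eq_norm] at this
    exact this.trans_lt hx.1
  have := hest x hx.2 hxk him
  simpa [norm_gauge] using this

lemma continuousOn_mg (S : Sol a lam r₀ p φ) :
    ContinuousOn (mg1 a φ) (halfDisk (proj a) r₀ \ {a}) ∧
    ContinuousOn (mg2 a φ) (halfDisk (proj a) r₀ \ {a}) :=
  ⟨fun _ hx => (differentiableAt_mg1 hx.2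
      (S.contDiffAt hx.1 hx.2)).continuousAt.continuousWithinAt,
   fun _ hx => (differentiableAt_mg2 hx.2
      (S.contDiffAt hx.1 hx.2)).continuousAt.continuousWithinAt⟩

lemma bound_mg (S : Sol a lam r₀ p φ) {R ε : ℝ} (hR : R < r₀) (hε : 0 < ε) :
    ∃ C : ℝ, 0 ≤ C ∧ ∀ x ∈ halfDisk (proj a) R, ε ≤ dist x a →
      ‖mg1 a φ x‖ ≤ C ∧ ‖mg2 a φ x‖ ≤ C := by
  obtain ⟨C, k, hk, hka, hC, hest⟩ := S.near_bdry hR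
  set K : Set ℂ := (Metric.closedBall (proj a) R ∩ {x | k ≤ x.re}) ∩ {x | ε ≤ dist x a} with hK
  have hKc : IsCompact K :=
    ((isCompact_closedBall _ _).inter_right (isClosed_le continuous_const
      Complex.continuous_re)).inter_right
      (isClosed_le continuous_const (continuous_id.dist continuous_const))
  have hKU : K ⊆ halfDisk (proj a) r₀ \ {a} := by
    rintro x ⟨⟨h1, h2⟩, h3⟩
    have h1' : dist x (proj a) ≤ R := h1
    have h2' : k ≤ x.re := h2
    have h3' : ε ≤ dist x a := h3
    refine ⟨⟨by linarith, by linarith⟩, ?_⟩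
    rintro rfl
    rw [dist_self] at h3'
    linarith
  obtain ⟨B1, hB1⟩ := hKc.exists_bound_of_continuousOn (S.continuousOn_mg.1.mono hKU)
  obtain ⟨B2, hB2⟩ := hKc.exists_bound_of_continuousOn (S.continuousOn_mg.2.mono hKU)
  have hCk : 0 ≤ C * k := by positivity
  refine ⟨max (max B1 B2) (C + C * k), le_max_of_le_right (by linarith), fun x hx hxa => ?_⟩
  by_cases hxk : x.re < k
  · obtain ⟨h1, h2⟩ := hest x hx hxk
    have : C * x.re ≤ C * k := mul_le_mul_of_nonneg_left hxk.le hC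
    exact ⟨le_max_of_le_right (by linarith), le_max_of_le_right (by linarith)⟩
  · push Not at hxk
    have hxK : x ∈ K := ⟨⟨(hx.1.le : dist x (proj a) ≤ R), hxk⟩, hxa⟩
    exact ⟨le_max_of_le_left (le_max_of_le_left (hB1 x hxK)),
      le_max_of_le_left (le_max_of_le_right (hB2 x hxK))⟩

end Sol

/-- First component of the Pohozaev field
`W = Re[conj((i∇+A)φ·X) (i∇+A)φ] - (1/2)(|(i∇+A)φ|² - λp|φ|²) X`, `X = x - π(a)`. -/
def pohoW1 (a : ℂ) (lam : ℝ) (p : ℂ → ℝ) (φ : ℂ → ℂ) (x : ℂ) : ℝ :=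
  (mg1 a φ x * (starRingEnd ℂ) (mg1 a φ x * (((x - proj a).re : ℝ) : ℂ) +
        mg2 a φ x * (((x - proj a).im : ℝ) : ℂ))).re -
    (1 / 2) * (mgSq a φ x - lam * p x * ‖φ x‖ ^ 2) * (x - proj a).re

/-- Second component of the Pohozaev field, see `pohoW1`. -/
def pohoW2 (a : ℂ) (lam : ℝ) (p : ℂ → ℝ) (φ : ℂ → ℂ) (x : ℂ) : ℝ :=
  (mg2 a φ x * (starRingEnd ℂ) (mg1 a φ x * (((x - proj a).re : ℝ) : ℂ) +
        mg2 a φ x * (((x - proj a).im : ℝ) : ℂ))).re -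
    (1 / 2) * (mgSq a φ x - lam * p x * ‖φ x‖ ^ 2) * (x - proj a).im

/-- The divergence of the Pohozaev field away from the pole, see `Sol.poho_div`. -/
def pohoDiv (a : ℂ) (lam : ℝ) (p : ℂ → ℝ) (φ : ℂ → ℂ) (x : ℂ) : ℝ :=
  lam / 2 * (‖φ x‖ ^ 2 * (2 * p x + fderiv ℝ p x (x - proj a)))

lemma norm_sq_eq (z : ℂ) : ‖z‖ ^ 2 = z.re * z.re + z.im * z.im := by
  rw [← Complex.normSq_eq_norm_sq, Complex.normSq_apply]

/-- Pohozaev identity in divergence form: `pohoDiv` is the divergence of `W` away from the pole. -/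
lemma Sol.poho_div {a : ℂ} {lam r₀ : ℝ} {p : ℂ → ℝ} {φ : ℂ → ℂ} (S : Sol a lam r₀ p φ) {x : ℂ}
    (hx : x ∈ halfDisk (proj a) r₀) (hxa : x ≠ a) :
    ∃ W1' W2' : ℂ →L[ℝ] ℝ, HasFDerivAt (pohoW1 a lam p φ) W1' x ∧
      HasFDerivAt (pohoW2 a lam p φ) W2' x ∧ W1' 1 + W2' Complex.I = pohoDiv a lam p φ x := by
  have hC := S.contDiffAt hx hxa
  have d1 := (differentiableAt_mg1 hxa hC).hasFDerivAt
  have d2 := (differentiableAt_mg2 hxa hC).hasFDerivAt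
  have dφ := (hC.differentiableAt (by norm_num)).hasFDerivAt
  have dp := (S.hp.differentiable (by norm_num) x).hasFDerivAt
  have r1 := Complex.reCLM.hasFDerivAt.comp x d1
  have i1 := Complex.imCLM.hasFDerivAt.comp x d1
  have r2 := Complex.reCLM.hasFDerivAt.comp x d2
  have i2 := Complex.imCLM.hasFDerivAt.comp x d2
  have rf := Complex.reCLM.hasFDerivAt.comp x dφ
  have jf := Complex.imCLM.hasFDerivAt.comp x dφ
  have X1 := (Complex.reCLM.hasFDerivAt (x := x)).sub_const (proj a).re
  have X2 := (Complex.imCLM.hasFDerivAt (x := x)).sub_const (proj a).im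
  have hdiv := mg_div hxa hC
  rw [S.heq x ⟨hx, hxa⟩] at hdiv
  have hcurl := mg_curl hxa hC
  have pf := ((dp.const_mul lam).mul ((rf.mul rf).add (jf.mul jf)))
  have s1 := (r1.mul r1).add (i1.mul i1)
  have s2 := (r2.mul r2).add (i2.mul i2)
  have cr := (r1.mul r2).add (i1.mul i2)
  have F1 := ((((s1.sub s2).add pf).mul X1).const_mul (1 / 2 : ℝ)).add (cr.mul X2)
  have F2 := ((((s2.sub s1).add pf).mul X2).const_mul (1 / 2 : ℝ)).add (cr.mul X1)
  refine ⟨_, _, F1.congr_of_eventuallyEq (Eventually.of_forall fun y => ?_),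
    F2.congr_of_eventuallyEq (Eventually.of_forall fun y => ?_), ?_⟩
  · simp [pohoW1, mgSq, norm_sq_eq]
    ring
  · simp [pohoW2, mgSq, norm_sq_eq]
    ring
  · have hX : fderiv ℝ p x (x - proj a) = (x.re - (proj a).re) * fderiv ℝ p x 1 +
        (x.im - (proj a).im) * fderiv ℝ p x Complex.I := by
      have : x - proj a = (x.re - (proj a).re) • (1:ℂ) + (x.im - (proj a).im) • Complex.I := by
        apply Complex.ext <;> simp
      conv_lhs => rw [this]
      rw [map_add, map_smul, map_smul]; rfl
    have e1 := congrArg Complex.re hdiv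
    have e2 := congrArg Complex.im hdiv
    have e3 := congrArg Complex.re hcurl
    have e4 := congrArg Complex.im hcurl
    have m1r : (mg1 a φ x).re = -(fderiv ℝ φ x 1).im + abPot1 a x * (φ x).re := by simp [mg1, pd1]
    have m1i : (mg1 a φ x).im = (fderiv ℝ φ x 1).re + abPot1 a x * (φ x).im := by simp [mg1, pd1]
    have m2r : (mg2 a φ x).re = -(fderiv ℝ φ x Complex.I).im + abPot2 a x * (φ x).re := by
      simp [mg2, pd2]
    have m2i : (mg2 a φ x).im = (fderiv ℝ φ x Complex.I).re + abPot2 a x * (φ x).im := by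
      simp [mg2, pd2]
    simp only [pohoDiv, hX, norm_sq_eq]
    simp at e1 e2 e3 e4 ⊢
    linear_combination
      ((mg1 a φ x).re * x.re + (mg2 a φ x).re * (x.im - a.im)) * e2 -
      ((mg1 a φ x).im * x.re + (mg2 a φ x).im * (x.im - a.im)) * e1 +
      ((mg1 a φ x).re * (x.im - a.im) - (mg2 a φ x).re * x.re) * e4 -
      ((mg1 a φ x).im * (x.im - a.im) - (mg2 a φ x).im * x.re) * e3 -
      lam * p x * x.re * (φ x).re * m1i + lam * p x * x.re * (φ x).im * m1r -
      lam * p x * (x.im - a.im) * (φ x).re * m2i + lam * p x * (x.im - a.im) * (φ x).im * m2r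

/-! ### Polar coordinates and the divergence theorem -/

lemma circleMap_eq (c : ℂ) (ρ θ : ℝ) :
    circleMap c ρ θ = c + (ρ * Real.cos θ) • (1:ℂ) + (ρ * Real.sin θ) • Complex.I := by
  rw [circleMap, Complex.exp_mul_I]
  simp only [Complex.real_smul]
  push_cast
  ring

@[simp] lemma circleMap_re (c : ℂ) (ρ θ : ℝ) :
    (circleMap c ρ θ).re = c.re + ρ * Real.cos θ := by
  simp [circleMap_eq, -Complex.ofReal_cos, -Complex.ofReal_sin]

@[simp] lemma circleMap_im (c : ℂ) (ρ θ : ℝ) :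
    (circleMap c ρ θ).im = c.im + ρ * Real.sin θ := by
  simp [circleMap_eq, -Complex.ofReal_cos, -Complex.ofReal_sin]

lemma continuous_circleMap2 (c : ℂ) : Continuous fun q : ℝ × ℝ => circleMap c q.1 q.2 := by
  unfold circleMap
  fun_prop

lemma dist_circleMap (c : ℂ) {ρ : ℝ} (hρ : 0 ≤ ρ) (θ : ℝ) : dist (circleMap c ρ θ) c = ρ := by
  rw [dist_eq_norm, circleMap_sub_center, norm_circleMap_zero, abs_of_nonneg hρ]

lemma circleMap_mem_halfDisk {c : ℂ} (hc : c.re = 0) {ρ r θ : ℝ} (hρ : 0 < ρ) (hr : ρ < r)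
    (hθ : θ ∈ Ioo (-(π / 2)) (π / 2)) : circleMap c ρ θ ∈ halfDisk c r := by
  refine ⟨by rwa [dist_circleMap c hρ.le], ?_⟩
  rw [circleMap_re, hc, zero_add]
  exact mul_pos hρ (cos_pos_of_mem_Ioo hθ)

/-- Divergence theorem on the annular sector `[ρ1, ρ2] × [θ1, θ2]` in polar coordinates. -/
lemma polar_div {c : ℂ} {ρ1 ρ2 θ1 θ2 : ℝ} {w1 w2 D : ℂ → ℝ} (hρ : ρ1 ≤ ρ2) (hθ : θ1 ≤ θ2)
    (h : ∀ ρ ∈ Icc ρ1 ρ2, ∀ θ ∈ Icc θ1 θ2, ∃ w1' w2' : ℂ →L[ℝ] ℝ,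
      HasFDerivAt w1 w1' (circleMap c ρ θ) ∧ HasFDerivAt w2 w2' (circleMap c ρ θ) ∧
      w1' 1 + w2' Complex.I = D (circleMap c ρ θ))
    (hD : ∀ ρ ∈ Icc ρ1 ρ2, ∀ θ ∈ Icc θ1 θ2, ContinuousAt D (circleMap c ρ θ)) :
    ∫ ρ in ρ1..ρ2, ∫ θ in θ1..θ2, ρ * D (circleMap c ρ θ) =
      (((∫ ρ in ρ1..ρ2, (-(w1 (circleMap c ρ θ2)) * sin θ2 + w2 (circleMap c ρ θ2) * cos θ2)) -
        ∫ ρ in ρ1..ρ2, (-(w1 (circleMap c ρ θ1)) * sin θ1 + w2 (circleMap c ρ θ1) * cos θ1)) +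
        ∫ θ in θ1..θ2, ρ2 * (w1 (circleMap c ρ2 θ) * cos θ + w2 (circleMap c ρ2 θ) * sin θ)) -
        ∫ θ in θ1..θ2, ρ1 * (w1 (circleMap c ρ1 θ) * cos θ + w2 (circleMap c ρ1 θ) * sin θ) := by
  set R : Set (ℝ × ℝ) := Icc ρ1 ρ2 ×ˢ Icc θ1 θ2 with hR
  have hdiff : ∀ q : ℝ × ℝ, ∃ w1' w2' : ℂ →L[ℝ] ℝ, q ∈ R →
      HasFDerivAt w1 w1' (circleMap c q.1 q.2) ∧ HasFDerivAt w2 w2' (circleMap c q.1 q.2) ∧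
      w1' 1 + w2' Complex.I = D (circleMap c q.1 q.2) := by
    intro q
    by_cases hq : q ∈ R
    · obtain ⟨u, v, huv⟩ := h q.1 hq.1 q.2 hq.2
      exact ⟨u, v, fun _ => huv⟩
    · exact ⟨0, 0, fun h => absurd h hq⟩
  choose u v huv using hdiff
  -- derivative of polar coordinates
  set C' : ℝ × ℝ → (ℝ × ℝ →L[ℝ] ℂ) := fun q =>
    (ContinuousLinearMap.fst ℝ ℝ ℝ).smulRight (cos q.2 + sin q.2 * Complex.I) +
    (ContinuousLinearMap.snd ℝ ℝ ℝ).smulRight ((q.1:ℂ) * (-sin q.2 + cos q.2 * Complex.I)) with hC'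
  have hfst : ∀ q : ℝ × ℝ, HasFDerivAt (fun q : ℝ × ℝ => q.1) (ContinuousLinearMap.fst ℝ ℝ ℝ) q :=
    fun q => hasFDerivAt_fst
  have hcos : ∀ q : ℝ × ℝ, HasFDerivAt (fun q : ℝ × ℝ => cos q.2)
      ((-sin q.2) • ContinuousLinearMap.snd ℝ ℝ ℝ) q :=
    fun q => (Real.hasDerivAt_cos q.2).comp_hasFDerivAt q hasFDerivAt_snd
  have hsin : ∀ q : ℝ × ℝ, HasFDerivAt (fun q : ℝ × ℝ => sin q.2)
      ((cos q.2) • ContinuousLinearMap.snd ℝ ℝ ℝ) q :=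
    fun q => (Real.hasDerivAt_sin q.2).comp_hasFDerivAt q hasFDerivAt_snd
  have hCd : ∀ q : ℝ × ℝ, HasFDerivAt (fun q : ℝ × ℝ => circleMap c q.1 q.2) (C' q) q := by
    intro q
    have e : (fun q : ℝ × ℝ => circleMap c q.1 q.2) = fun q : ℝ × ℝ =>
        c + (q.1 * Real.cos q.2) • (1:ℂ) + (q.1 * Real.sin q.2) • Complex.I := by
      funext q; exact circleMap_eq c q.1 q.2
    rw [e]
    have := ((((hfst q).mul (hcos q)).smul_const (1:ℂ)).const_add c).add
      (((hfst q).mul (hsin q)).smul_const Complex.I)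
    refine this.congr_fderiv ?_
    ext <;> simp [hC'] <;> ring
  have hw1 : ∀ q ∈ R, HasFDerivAt (fun q : ℝ × ℝ => w1 (circleMap c q.1 q.2))
      ((u q).comp (C' q)) q := fun q hq => (huv q hq).1.comp q (hCd q)
  have hw2 : ∀ q ∈ R, HasFDerivAt (fun q : ℝ × ℝ => w2 (circleMap c q.1 q.2))
      ((v q).comp (C' q)) q := fun q hq => (huv q hq).2.1.comp q (hCd q)
  set P' : ℝ × ℝ → (ℝ × ℝ →L[ℝ] ℝ) := fun q =>
    q.1 • (w1 (circleMap c q.1 q.2) • -sin q.2 • ContinuousLinearMap.snd ℝ ℝ ℝ +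
      cos q.2 • (u q).comp (C' q) + (w2 (circleMap c q.1 q.2) • cos q.2 •
      ContinuousLinearMap.snd ℝ ℝ ℝ + sin q.2 • (v q).comp (C' q))) +
    (w1 (circleMap c q.1 q.2) * cos q.2 + w2 (circleMap c q.1 q.2) * sin q.2) •
      ContinuousLinearMap.fst ℝ ℝ ℝ with hP'
  set Q' : ℝ × ℝ → (ℝ × ℝ →L[ℝ] ℝ) := fun q =>
    (-w1 (circleMap c q.1 q.2)) • cos q.2 • ContinuousLinearMap.snd ℝ ℝ ℝ +
      sin q.2 • -(u q).comp (C' q) + (w2 (circleMap c q.1 q.2) • -sin q.2 •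
      ContinuousLinearMap.snd ℝ ℝ ℝ + cos q.2 • (v q).comp (C' q)) with hQ'
  have hP : ∀ q ∈ R, HasFDerivAt (fun q : ℝ × ℝ => q.1 * (w1 (circleMap c q.1 q.2) * cos q.2 +
      w2 (circleMap c q.1 q.2) * sin q.2)) (P' q) q :=
    fun q hq => (hfst q).mul (((hw1 q hq).mul (hcos q)).add ((hw2 q hq).mul (hsin q)))
  have hQ : ∀ q ∈ R, HasFDerivAt (fun q : ℝ × ℝ => -(w1 (circleMap c q.1 q.2)) * sin q.2 +
      w2 (circleMap c q.1 q.2) * cos q.2) (Q' q) q :=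
    fun q hq => ((hw1 q hq).neg.mul (hsin q)).add ((hw2 q hq).mul (hcos q))
  have key : ∀ q ∈ R, P' q (1, 0) + Q' q (0, 1) = q.1 * D (circleMap c q.1 q.2) := by
    intro q hq
    have c1 : C' q (1, 0) = cos q.2 • (1:ℂ) + sin q.2 • Complex.I := by simp [hC']
    have c2 : C' q (0, 1) = q.1 • ((-sin q.2) • (1:ℂ) + cos q.2 • Complex.I) := by
      simp [hC']; ring
    have e : ∀ (w : ℂ →L[ℝ] ℝ) (s t : ℝ), w (s • (1:ℂ) + t • Complex.I) =
        s * w 1 + t * w Complex.I := by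
      intro w s t; rw [map_add, map_smul, map_smul]; rfl
    have := (huv q hq).2.2
    have hsc := Real.sin_sq_add_cos_sq q.2
    simp only [hP', hQ', add_apply, smul_apply,
      neg_apply, ContinuousLinearMap.comp_apply, c1, c2, map_smul, e,
      ContinuousLinearMap.coe_fst', ContinuousLinearMap.coe_snd', smul_eq_mul]
    rw [← this]
    linear_combination q.1 * (u q 1 + v q Complex.I) * hsc
  have := integral2_divergence_prod_of_hasFDerivAt
    (fun q : ℝ × ℝ => q.1 * (w1 (circleMap c q.1 q.2) * cos q.2 +
      w2 (circleMap c q.1 q.2) * sin q.2))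
    (fun q : ℝ × ℝ => -(w1 (circleMap c q.1 q.2)) * sin q.2 + w2 (circleMap c q.1 q.2) * cos q.2)
    P' Q' ρ1 θ1 ρ2 θ2
    (by
      rw [uIcc_of_le hρ, uIcc_of_le hθ]
      exact fun q hq => (hP q hq).continuousAt.continuousWithinAt)
    (by
      rw [uIcc_of_le hρ, uIcc_of_le hθ]
      exact fun q hq => (hQ q hq).continuousAt.continuousWithinAt)
    (fun q hq => by
      rw [min_eq_left hρ, max_eq_right hρ, min_eq_left hθ, max_eq_right hθ] at hq
      exact hP q ⟨Ioo_subset_Icc_self hq.1, Ioo_subset_Icc_self hq.2⟩)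
    (fun q hq => by
      rw [min_eq_left hρ, max_eq_right hρ, min_eq_left hθ, max_eq_right hθ] at hq
      exact hQ q ⟨Ioo_subset_Icc_self hq.1, Ioo_subset_Icc_self hq.2⟩)
    (by
      rw [uIcc_of_le hρ, uIcc_of_le hθ]
      have hc : ContinuousOn (fun q : ℝ × ℝ => q.1 * D (circleMap c q.1 q.2)) R := by
        intro q hq
        have h2 : ContinuousAt (fun q : ℝ × ℝ => D (circleMap c q.1 q.2)) q :=
          ContinuousAt.comp (f := fun q : ℝ × ℝ => circleMap c q.1 q.2)
            (hD q.1 hq.1 q.2 hq.2) (continuous_circleMap2 c).continuousAt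
        exact (continuousAt_fst.mul h2).continuousWithinAt
      refine (hc.integrableOn_compact (isCompact_Icc.prod isCompact_Icc)).congr_fun ?_
        (measurableSet_Icc.prod measurableSet_Icc)
      exact fun q hq => (key q hq).symm)
  rw [← this]
  refine intervalIntegral.integral_congr fun ρ hρ' => intervalIntegral.integral_congr fun θ hθ' => ?_
  rw [uIcc_of_le hρ] at hρ'
  rw [uIcc_of_le hθ] at hθ'
  exact (key (ρ, θ) ⟨hρ', hθ'⟩).symm

lemma polar_set {c : ℂ} {s : Set ℂ} {T : Set (ℝ × ℝ)} (hs : MeasurableSet s)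
    (hTm : MeasurableSet T) (hT : T ⊆ Ioi 0 ×ˢ Ioo (-π) π)
    (h : ∀ q ∈ Ioi (0:ℝ) ×ˢ Ioo (-π) π, circleMap c q.1 q.2 ∈ s ↔ q ∈ T) (g : ℂ → ℝ) :
    (IntegrableOn g s ↔ IntegrableOn (fun q : ℝ × ℝ => q.1 * g (circleMap c q.1 q.2)) T) ∧
    ∫ x in s, g x = ∫ q in T, q.1 * g (circleMap c q.1 q.2) := by
  set f : ℂ → ℝ := fun x => s.indicator g (c + x) with hf
  have hcm : ∀ q : ℝ × ℝ, c + Complex.polarCoord.symm q = circleMap c q.1 q.2 := by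
    intro q
    rw [Complex.polarCoord_symm_apply, circleMap_eq]
    simp only [Complex.real_smul]
    push_cast
    ring
  have htm : MeasurableSet (polarCoord.target) := polarCoord.open_target.measurableSet
  have hind : ∀ q ∈ polarCoord.target, q.1 * f (Complex.polarCoord.symm q) =
      T.indicator (fun q : ℝ × ℝ => q.1 * g (circleMap c q.1 q.2)) q := by
    intro q hq
    simp only [hf, hcm]
    by_cases hqT : q ∈ T
    · rw [indicator_of_mem hqT, indicator_of_mem ((h q hq).2 hqT)]
    · rw [indicator_of_notMem hqT, indicator_of_notMem (fun hh => hqT ((h q hq).1 hh)), mul_zero]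
  have hTi : polarCoord.target ∩ T = T := inter_eq_right.2 hT
  constructor
  · rw [← integrable_indicator_iff hs]
    have h1 : Integrable (s.indicator g) ↔ Integrable f :=
      ((measurePreserving_add_left volume c).integrable_comp_emb
        (measurableEmbedding_addLeft c)).symm
    have h2 : Integrable f ↔ Integrable (fun q => f (Complex.measurableEquivRealProd.symm q)) :=
      ((Complex.volume_preserving_equiv_real_prod.symm).integrable_comp_emb
        Complex.measurableEquivRealProd.symm.measurableEmbedding).symm
    have h3 : Integrable (fun q => f (Complex.measurableEquivRealProd.symm q)) ↔
        IntegrableOn (fun q => f (Complex.measurableEquivRealProd.symm q))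
          (polarCoord.symm '' polarCoord.target) := by
      rw [polarCoord.symm_image_target_eq_source,
        integrableOn_congr_set_ae polarCoord_source_ae_eq_univ, integrableOn_univ]
    rw [h1, h2, h3, integrableOn_image_iff_integrableOn_abs_det_fderiv_smul volume htm
      (fun p _ => (hasFDerivAt_polarCoord_symm p).hasFDerivWithinAt) polarCoord.symm.injOn]
    have h4 : EqOn (fun q : ℝ × ℝ => |(fderivPolarCoordSymm q).det| •
        f (Complex.measurableEquivRealProd.symm (polarCoord.symm q)))
        (T.indicator (fun q : ℝ × ℝ => q.1 * g (circleMap c q.1 q.2))) polarCoord.target := by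
      intro q hq
      have hq1 : 0 < q.1 := hq.1
      simp only [det_fderivPolarCoordSymm, abs_of_pos hq1, smul_eq_mul,
        Complex.measurableEquivRealProd_symm_polarCoord_symm_apply]
      exact hind q hq
    rw [integrableOn_congr_fun h4 htm, IntegrableOn, integrable_indicator_iff hTm, IntegrableOn,
      Measure.restrict_restrict hTm, inter_comm, hTi, IntegrableOn]
  · rw [← integral_indicator hs, ← integral_add_left_eq_self _ c,
      ← Complex.integral_comp_polarCoord_symm]
    change ∫ q in polarCoord.target, q.1 * f (Complex.polarCoord.symm q) = _
    rw [setIntegral_congr_fun htm hind, setIntegral_indicator hTm, hTi]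

/-- Polar coordinates on a half-disk centred on the axis. -/
lemma polar_halfDisk {c : ℂ} (hc : c.re = 0) (r : ℝ) (g : ℂ → ℝ) :
    (IntegrableOn g (halfDisk c r) ↔ IntegrableOn (fun q : ℝ × ℝ => q.1 * g (circleMap c q.1 q.2))
      (Ioo 0 r ×ˢ Ioo (-(π / 2)) (π / 2))) ∧
    ∫ x in halfDisk c r, g x =
      ∫ q in Ioo 0 r ×ˢ Ioo (-(π / 2)) (π / 2), q.1 * g (circleMap c q.1 q.2) := by
  have hpi := Real.pi_pos
  refine polar_set (isOpen_halfDisk c r).measurableSet (measurableSet_Ioo.prod measurableSet_Ioo)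
    ?_ ?_ g
  · rintro q ⟨h1, h2⟩
    exact ⟨h1.1, by linarith [h2.1], by linarith [h2.2]⟩
  · rintro q ⟨h1, h2⟩
    have h1' : 0 < q.1 := h1
    constructor
    · rintro ⟨h3, h4⟩
      rw [dist_circleMap c h1'.le] at h3
      rw [circleMap_re, hc, zero_add] at h4
      have hcos : 0 < cos q.2 := pos_of_mul_pos_right h4 h1'.le
      refine ⟨⟨h1', h3⟩, ?_, ?_⟩
      · by_contra hcon
        push Not at hcon
        have := cos_nonpos_of_pi_div_two_le_of_le (x := -q.2) (by linarith) (by linarith [h2.1])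
        rw [cos_neg] at this
        linarith
      · by_contra hcon
        push Not at hcon
        have := cos_nonpos_of_pi_div_two_le_of_le (x := q.2) hcon (by linarith [h2.2])
        linarith
    · rintro ⟨h3, h4⟩
      exact circleMap_mem_halfDisk hc h1' h3.2 h4

/-- Polar coordinates on a disk. -/
lemma polar_ball (c : ℂ) (r : ℝ) (g : ℂ → ℝ) :
    (IntegrableOn g (Metric.ball c r) ↔
      IntegrableOn (fun q : ℝ × ℝ => q.1 * g (circleMap c q.1 q.2)) (Ioo 0 r ×ˢ Ioo (-π) π)) ∧
    ∫ x in Metric.ball c r, g x = ∫ q in Ioo 0 r ×ˢ Ioo (-π) π, q.1 * g (circleMap c q.1 q.2) := by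
  refine polar_set Metric.isOpen_ball.measurableSet (measurableSet_Ioo.prod measurableSet_Ioo)
    ?_ ?_ g
  · rintro q ⟨h1, h2⟩
    exact ⟨h1.1, h2⟩
  · rintro q ⟨h1, h2⟩
    have h1' : 0 < q.1 := h1
    rw [Metric.mem_ball, dist_circleMap c h1'.le]
    exact ⟨fun h => ⟨⟨h1', h⟩, h2⟩, fun h => h.1.2⟩

/-! ### Cut-off Pohozaev fields -/

/-- Divergence of `χ W`, where `W` is the Pohozaev field. -/
def cutDiv (a : ℂ) (lam : ℝ) (p : ℂ → ℝ) (φ : ℂ → ℂ) (χ : ℂ → ℝ) (x : ℂ) : ℝ :=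
  χ x * pohoDiv a lam p φ x +
    (fderiv ℝ χ x 1 * pohoW1 a lam p φ x + fderiv ℝ χ x Complex.I * pohoW2 a lam p φ x)

lemma cutDiv_one_sub {a : ℂ} {lam : ℝ} {p : ℂ → ℝ} {φ : ℂ → ℂ} {χ : ℂ → ℝ} (x : ℂ) :
    cutDiv a lam p φ χ x =
      pohoDiv a lam p φ x - cutDiv a lam p φ (fun y => 1 - χ y) x := by
  simp only [cutDiv, fderiv_const_sub, neg_apply]
  ring

lemma norm_add_mul_le {z w : ℂ} {s t C R : ℝ} (hz : ‖z‖ ≤ C) (hw : ‖w‖ ≤ C) (hs : |s| ≤ R)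
    (ht : |t| ≤ R) : ‖z * (s : ℂ) + w * (t : ℂ)‖ ≤ 2 * (C * R) := by
  have hC : 0 ≤ C := (norm_nonneg _).trans hz
  have h1 : ‖z * (s : ℂ)‖ ≤ C * R := by
    rw [norm_mul, Complex.norm_real, Real.norm_eq_abs]
    exact mul_le_mul hz hs (abs_nonneg _) hC
  have h2 : ‖w * (t : ℂ)‖ ≤ C * R := by
    rw [norm_mul, Complex.norm_real, Real.norm_eq_abs]
    exact mul_le_mul hw ht (abs_nonneg _) hC
  linarith [norm_add_le (z * (s : ℂ)) (w * (t : ℂ))]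

namespace Sol
variable {a : ℂ} {lam r₀ : ℝ} {p : ℂ → ℝ} {φ : ℂ → ℂ}

/-- The potential term `λ p |φ|²` is bounded. -/
lemma bound_pot (S : Sol a lam r₀ p φ) :
    ∃ K : ℝ, 0 ≤ K ∧ ∀ x ∈ halfDisk (proj a) r₀, |lam * p x * ‖φ x‖ ^ 2| ≤ K := by
  obtain ⟨B, hB, hφ⟩ := S.bound_phi
  obtain ⟨Q, hQ, -⟩ := S.hq
  have hQ0 : 0 ≤ Q := (abs_nonneg _).trans (hQ 0)
  refine ⟨Q * B ^ 2, by positivity, fun x hx => ?_⟩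
  rw [abs_mul, abs_of_nonneg (by positivity : (0:ℝ) ≤ ‖φ x‖ ^ 2)]
  exact mul_le_mul (hQ x) (pow_le_pow_left₀ (norm_nonneg _) (hφ x hx) 2) (by positivity) hQ0

lemma abs_coord_le {x c : ℂ} {R : ℝ} (hx : x ∈ halfDisk c R) :
    |(x - c).re| ≤ R ∧ |(x - c).im| ≤ R := by
  have h : ‖x - c‖ < R := by rw [← dist_eq_norm]; exact hx.1
  exact ⟨(Complex.abs_re_le_norm _).trans h.le, (Complex.abs_im_le_norm _).trans h.le⟩

lemma bound_W (S : Sol a lam r₀ p φ) {R ε : ℝ} (hR : R < r₀) (hε : 0 < ε) :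
    ∃ K : ℝ, 0 ≤ K ∧ ∀ x ∈ halfDisk (proj a) R, ε ≤ dist x a →
      |pohoW1 a lam p φ x| ≤ K ∧ |pohoW2 a lam p φ x| ≤ K := by
  obtain ⟨C, hC, hmg⟩ := S.bound_mg hR hε
  obtain ⟨P, hP, hpot⟩ := S.bound_pot
  have gen : ∀ x ∈ halfDisk (proj a) R, ε ≤ dist x a → ∀ (m : ℂ) (X : ℝ), ‖m‖ ≤ C → |X| ≤ |R| →
      |(m * (starRingEnd ℂ) (mg1 a φ x * (((x - proj a).re : ℝ) : ℂ) +
        mg2 a φ x * (((x - proj a).im : ℝ) : ℂ))).re -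
        (1 / 2) * (mgSq a φ x - lam * p x * ‖φ x‖ ^ 2) * X| ≤
      C * (2 * (C * |R|)) + (2 * C ^ 2 + P) * |R| := by
    intro x hx hxa m X hm hX
    obtain ⟨h1, h2⟩ := hmg x hx hxa
    obtain ⟨x1, x2⟩ := abs_coord_le hx
    have hP' := hpot x (halfDisk_mono _ hR.le hx)
    have t1 : |(m * (starRingEnd ℂ) (mg1 a φ x * (((x - proj a).re : ℝ) : ℂ) +
        mg2 a φ x * (((x - proj a).im : ℝ) : ℂ))).re| ≤ C * (2 * (C * |R|)) := by
      refine (Complex.abs_re_le_norm _).trans ?_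
      rw [norm_mul, RCLike.norm_conj]
      exact mul_le_mul hm (norm_add_mul_le h1 h2 (x1.trans (le_abs_self _))
        (x2.trans (le_abs_self _))) (norm_nonneg _) hC
    have t2 : |mgSq a φ x - lam * p x * ‖φ x‖ ^ 2| ≤ 2 * C ^ 2 + P := by
      have e1 := pow_le_pow_left₀ (norm_nonneg _) h1 2
      have e2 := pow_le_pow_left₀ (norm_nonneg _) h2 2
      have e3 : |mgSq a φ x| ≤ 2 * C ^ 2 := by
        rw [mgSq, abs_of_nonneg (by positivity)]
        linarith
      exact (abs_sub _ _).trans (add_le_add e3 hP')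
    have t3 : |(1 / 2) * (mgSq a φ x - lam * p x * ‖φ x‖ ^ 2) * X| ≤ (2 * C ^ 2 + P) * |R| := by
      rw [abs_mul, abs_mul]
      refine mul_le_mul ?_ hX (abs_nonneg _) (by positivity)
      rw [abs_of_pos (by norm_num : (0:ℝ) < 1 / 2)]
      linarith [abs_nonneg (mgSq a φ x - lam * p x * ‖φ x‖ ^ 2)]
    exact (abs_sub _ _).trans (add_le_add t1 t3)
  refine ⟨C * (2 * (C * |R|)) + (2 * C ^ 2 + P) * |R|, by positivity, fun x hx hxa => ?_⟩
  obtain ⟨x1, x2⟩ := abs_coord_le hx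
  exact ⟨gen x hx hxa _ _ (hmg x hx hxa).1 (x1.trans (le_abs_self _)),
    gen x hx hxa _ _ (hmg x hx hxa).2 (x2.trans (le_abs_self _))⟩

lemma continuousAt_W (S : Sol a lam r₀ p φ) {x : ℂ} (hx : x ∈ halfDisk (proj a) r₀)
    (hxa : x ≠ a) : ContinuousAt (pohoW1 a lam p φ) x ∧ ContinuousAt (pohoW2 a lam p φ) x := by
  obtain ⟨u, v, hu, hv, -⟩ := S.poho_div hx hxa
  exact ⟨hu.continuousAt, hv.continuousAt⟩

lemma continuousAt_phi (S : Sol a lam r₀ p φ) {x : ℂ} (hx : x ∈ halfDisk (proj a) r₀) :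
    ContinuousAt φ x :=
  (S.hcont.mono subset_closure).continuousAt ((isOpen_halfDisk _ _).mem_nhds hx)

lemma continuousAt_pohoDiv (S : Sol a lam r₀ p φ) {x : ℂ} (hx : x ∈ halfDisk (proj a) r₀) :
    ContinuousAt (pohoDiv a lam p φ) x := by
  have h1 := (S.continuousAt_phi hx).norm.pow 2
  have h2 : Continuous fun x => 2 * p x + fderiv ℝ p x (x - proj a) :=
    (continuous_const.mul S.hp.continuous).add
      ((S.hp.continuous_fderiv (by norm_num)).clm_apply (continuous_id.sub continuous_const))
  exact continuousAt_const.mul (h1.mul h2.continuousAt)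

lemma bound_pohoDiv (S : Sol a lam r₀ p φ) :
    ∃ K : ℝ, 0 ≤ K ∧ ∀ x ∈ halfDisk (proj a) r₀, |pohoDiv a lam p φ x| ≤ K := by
  have h2 : Continuous fun x => 2 * p x + fderiv ℝ p x (x - proj a) :=
    (continuous_const.mul S.hp.continuous).add
      ((S.hp.continuous_fderiv (by norm_num)).clm_apply (continuous_id.sub continuous_const))
  have h3 : ContinuousOn (pohoDiv a lam p φ) (closure (halfDisk (proj a) r₀)) :=
    continuousOn_const.mul ((S.hcont.norm.pow 2).mul h2.continuousOn)
  obtain ⟨B, hB⟩ := (isCompact_closure_halfDisk _ _).exists_bound_of_continuousOn h3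
  exact ⟨max B 0, le_max_right _ _,
    fun x hx => (hB x (subset_closure hx)).trans (le_max_left _ _)⟩

lemma integrableOn_of_bound {f : ℂ → ℝ} {c : ℂ} {r K : ℝ}
    (hf : ∀ x ∈ halfDisk c r, ContinuousAt f x) (hK : ∀ x ∈ halfDisk c r, |f x| ≤ K) :
    IntegrableOn f (halfDisk c r) := by
  have hm := (isOpen_halfDisk c r).measurableSet
  have hfin : volume (halfDisk c r) < ⊤ :=
    (measure_mono subset_closure).trans_lt (isCompact_closure_halfDisk c r).measure_lt_top
  refine IntegrableOn.of_bound hfin ?_ K ?_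
  · exact ContinuousOn.aestronglyMeasurable (fun x hx => (hf x hx).continuousWithinAt) hm
  · exact (ae_restrict_iff' hm).2 (Eventually.of_forall hK)

lemma integrableOn_pohoDiv (S : Sol a lam r₀ p φ) {r : ℝ} (hr : r ≤ r₀) :
    IntegrableOn (pohoDiv a lam p φ) (halfDisk (proj a) r) := by
  obtain ⟨K, -, hK⟩ := S.bound_pohoDiv
  exact integrableOn_of_bound (fun x hx => S.continuousAt_pohoDiv (halfDisk_mono _ hr hx))
    (fun x hx => hK x (halfDisk_mono _ hr hx))

lemma cut_hasFDerivAt (S : Sol a lam r₀ p φ) {χ : ℂ → ℝ} (hχ : ContDiff ℝ 1 χ) {x : ℂ}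
    (hx : x ∈ halfDisk (proj a) r₀) (hxa : x ≠ a) :
    ∃ w1 w2 : ℂ →L[ℝ] ℝ, HasFDerivAt (fun y => χ y * pohoW1 a lam p φ y) w1 x ∧
      HasFDerivAt (fun y => χ y * pohoW2 a lam p φ y) w2 x ∧
      w1 1 + w2 Complex.I = cutDiv a lam p φ χ x := by
  obtain ⟨u, v, hu, hv, huv⟩ := S.poho_div hx hxa
  have hχ' := (hχ.differentiable (by norm_num) x).hasFDerivAt
  refine ⟨_, _, hχ'.mul hu, hχ'.mul hv, ?_⟩
  simp only [add_apply, smul_apply, smul_eq_mul, cutDiv, ← huv]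
  ring

lemma cut_continuousAt (S : Sol a lam r₀ p φ) {χ : ℂ → ℝ} (hχ : ContDiff ℝ 1 χ) {x : ℂ}
    (hx : x ∈ halfDisk (proj a) r₀) (hxa : x ≠ a) : ContinuousAt (cutDiv a lam p φ χ) x := by
  have hd : ∀ v : ℂ, ContinuousAt (fun y => fderiv ℝ χ y v) x := fun v =>
    ((hχ.continuous_fderiv (by norm_num)).clm_apply continuous_const).continuousAt
  obtain ⟨h1, h2⟩ := S.continuousAt_W hx hxa
  exact (hχ.continuous.continuousAt.mul (S.continuousAt_pohoDiv hx)).add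
    (((hd 1).mul h1).add ((hd Complex.I).mul h2))

lemma cut_zero {η : ℂ → ℝ} {x : ℂ} (h : η =ᶠ[nhds x] 0) : cutDiv a lam p φ η x = 0 := by
  have h1 : fderiv ℝ η x = 0 := by
    rw [h.fderiv_eq, fderiv_zero]; rfl
  simp [cutDiv, h.eq_of_nhds, h1]

/-- For a cutoff vanishing near `a` the field `η W` is differentiable on the whole half-disk. -/
lemma cut_outer (S : Sol a lam r₀ p φ) {η : ℂ → ℝ} (hη : ContDiff ℝ 1 η) {d : ℝ} (hd : 0 < d)
    (h0 : ∀ y ∈ Metric.ball a d, η y = 0) {x : ℂ} (hx : x ∈ halfDisk (proj a) r₀) :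
    (∃ w1 w2 : ℂ →L[ℝ] ℝ, HasFDerivAt (fun y => η y * pohoW1 a lam p φ y) w1 x ∧
      HasFDerivAt (fun y => η y * pohoW2 a lam p φ y) w2 x ∧
      w1 1 + w2 Complex.I = cutDiv a lam p φ η x) ∧ ContinuousAt (cutDiv a lam p φ η) x := by
  by_cases hxa : x = a
  · subst hxa
    have hb : ∀ᶠ y in nhds x, y ∈ Metric.ball x d := Metric.ball_mem_nhds x hd
    have he : ∀ y ∈ Metric.ball x d, η =ᶠ[nhds y] 0 := fun y hy => by
      filter_upwards [Metric.isOpen_ball.mem_nhds hy] with z hz using h0 z hz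
    have hz : cutDiv x lam p φ η =ᶠ[nhds x] fun _ => 0 := by
      filter_upwards [hb] with y hy using cut_zero (he y hy)
    refine ⟨⟨0, 0, ?_, ?_, ?_⟩, continuousAt_const.congr hz.symm⟩
    · refine (hasFDerivAt_const (0:ℝ) x).congr_of_eventuallyEq ?_
      filter_upwards [hb] with y hy
      simp [h0 y hy]
    · refine (hasFDerivAt_const (0:ℝ) x).congr_of_eventuallyEq ?_
      filter_upwards [hb] with y hy
      simp [h0 y hy]
    · rw [hz.eq_of_nhds]; simp
  · exact ⟨S.cut_hasFDerivAt hη hx hxa, S.cut_continuousAt hη hx hxa⟩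

lemma integrableOn_cut (S : Sol a lam r₀ p φ) {η : ℂ → ℝ} (hη : ContDiff ℝ 1 η) {d : ℝ}
    (hd : 0 < d) (h0 : ∀ y ∈ Metric.ball a d, η y = 0) {r : ℝ} (hr : r < r₀) :
    IntegrableOn (cutDiv a lam p φ η) (halfDisk (proj a) r) := by
  obtain ⟨K, hK, hW⟩ := S.bound_W hr hd
  obtain ⟨L, hL, hdiv⟩ := S.bound_pohoDiv
  have hcd := hη.continuous_fderiv (by norm_num)
  obtain ⟨B0, hB0⟩ := (isCompact_closure_halfDisk (proj a) r).exists_bound_of_continuousOn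
    hη.continuous.continuousOn
  obtain ⟨B1, hB1⟩ := (isCompact_closure_halfDisk (proj a) r).exists_bound_of_continuousOn
    (hcd.clm_apply (continuous_const (y := (1:ℂ)))).continuousOn
  obtain ⟨B2, hB2⟩ := (isCompact_closure_halfDisk (proj a) r).exists_bound_of_continuousOn
    (hcd.clm_apply (continuous_const (y := Complex.I))).continuousOn
  refine integrableOn_of_bound (K := |B0| * L + (|B1| * K + |B2| * K))
    (fun x hx => (S.cut_outer hη hd h0 (halfDisk_mono _ hr.le hx)).2) fun x hx => ?_
  by_cases hxa : dist x a < d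
  · have he : η =ᶠ[nhds x] 0 := by
      filter_upwards [Metric.isOpen_ball.mem_nhds (Metric.mem_ball.2 hxa)] with z hz using h0 z hz
    rw [cut_zero he, abs_zero]
    positivity
  · obtain ⟨w1, w2⟩ := hW x hx (not_lt.1 hxa)
    have hm : ∀ {s t S T : ℝ}, |s| ≤ S → |t| ≤ T → |s * t| ≤ |S| * T := fun {s t S T} h1 h2 => by
      rw [abs_mul]
      exact mul_le_mul (h1.trans (le_abs_self _)) h2 (abs_nonneg _) (abs_nonneg _)
    refine (abs_add_le _ _).trans (add_le_add (hm (hB0 x (subset_closure hx))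
      (hdiv x (halfDisk_mono _ hr.le hx))) ((abs_add_le _ _).trans (add_le_add
      (hm (hB1 x (subset_closure hx)) w1) (hm (hB2 x (subset_closure hx)) w2))))

end Sol

/-! ### Exhaustion of polar rectangles and polar components of the Pohozaev field -/

lemma tendsto_setIntegral_exhaust {α : Type*} [MeasurableSpace α] {μ : Measure α} {g : α → ℝ}
    {T : Set α} {t : ℝ → Set α} (hg : IntegrableOn g T μ) (hTm : MeasurableSet T)
    (ht : ∀ δ, MeasurableSet (t δ)) (hsub : ∀ᶠ δ in nhdsWithin (0:ℝ) (Ioi 0), t δ ⊆ T)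
    (hev : ∀ q ∈ T, ∀ᶠ δ in nhdsWithin (0:ℝ) (Ioi 0), q ∈ t δ) :
    Tendsto (fun δ => ∫ x in t δ, g x ∂μ) (nhdsWithin (0:ℝ) (Ioi 0)) (nhds (∫ x in T, g x ∂μ)) := by
  have hc : AECover (μ.restrict T) (nhdsWithin (0:ℝ) (Ioi 0)) t :=
    ⟨(ae_restrict_iff' hTm).2 (Eventually.of_forall hev), ht⟩
  refine (hc.integral_tendsto_of_countably_generated hg).congr' ?_
  filter_upwards [hsub] with δ hδ
  rw [Measure.restrict_restrict (ht δ), inter_eq_left.2 hδ]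

/-- Exhaustion of a polar rectangle by smaller ones. The parameter `κ` tells whether the angular
interval is also shrunk. -/
lemma tendsto_polar_exhaust {G : ℝ × ℝ → ℝ} {r θ1 θ2 κ : ℝ} (hr : 0 < r) (hθ : θ1 < θ2)
    (hκ : 0 ≤ κ) (hG : IntegrableOn G (Ioo 0 r ×ˢ Ioo θ1 θ2)) :
    Tendsto (fun δ => ∫ ρ in δ..r, ∫ θ in (θ1 + κ * δ)..(θ2 - κ * δ), G (ρ, θ))
      (nhdsWithin (0:ℝ) (Ioi 0)) (nhds (∫ q in Ioo 0 r ×ˢ Ioo θ1 θ2, G q)) := by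
  have small : ∀ f : ℝ → ℝ, Continuous f → 0 < f 0 → ∀ᶠ δ in nhdsWithin (0:ℝ) (Ioi 0), 0 < f δ :=
    fun f hf h0 => (hf.tendsto 0).eventually (lt_mem_nhds h0) |>.filter_mono nhdsWithin_le_nhds
  have hsub : ∀ᶠ δ in nhdsWithin (0:ℝ) (Ioi 0),
      Ioo δ r ×ˢ Ioo (θ1 + κ * δ) (θ2 - κ * δ) ⊆ Ioo 0 r ×ˢ Ioo θ1 θ2 := by
    filter_upwards [self_mem_nhdsWithin] with δ hδ
    have hδ' : 0 < δ := hδ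
    have : 0 ≤ κ * δ := by positivity
    exact prod_mono (Ioo_subset_Ioo_left hδ'.le) (Ioo_subset_Ioo (by linarith) (by linarith))
  have := tendsto_setIntegral_exhaust (t := fun δ => Ioo δ r ×ˢ Ioo (θ1 + κ * δ) (θ2 - κ * δ)) hG
    (measurableSet_Ioo.prod measurableSet_Ioo)
    (fun δ => measurableSet_Ioo.prod measurableSet_Ioo) hsub ?_
  · refine this.congr' ?_
    filter_upwards [hsub, small (fun δ => r - δ) (by fun_prop) (by simpa using hr),
      small (fun δ => (θ2 - κ * δ) - (θ1 + κ * δ)) (by fun_prop) (by simpa using hθ)]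
      with δ h1 h2 h3
    rw [Measure.volume_eq_prod, setIntegral_prod _ (hG.mono_set h1),
      intervalIntegral.integral_of_le (by linarith), integral_Ioc_eq_integral_Ioo]
    refine setIntegral_congr_fun measurableSet_Ioo fun ρ _ => ?_
    rw [intervalIntegral.integral_of_le (by linarith), integral_Ioc_eq_integral_Ioo]
  · rintro ⟨ρ, θ⟩ ⟨⟨h1, h2⟩, h3, h4⟩
    filter_upwards [small (fun δ => ρ - δ) (by fun_prop) (by simpa using h1),
      small (fun δ => θ - (θ1 + κ * δ)) (by fun_prop) (by simpa using h3),
      small (fun δ => (θ2 - κ * δ) - θ) (by fun_prop) (by simpa using h4)] with δ h5 h6 h7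
    simp only at h2
    exact ⟨⟨by simp only; linarith, h2⟩, by simp only; linarith, by simp only; linarith⟩

lemma tendsto_Ioo_exhaust {g : ℝ → ℝ} {θ1 θ2 : ℝ} (hθ : θ1 < θ2) (hg : IntegrableOn g (Ioo θ1 θ2)) :
    Tendsto (fun δ => ∫ θ in (θ1 + δ)..(θ2 - δ), g θ)
      (nhdsWithin (0:ℝ) (Ioi 0)) (nhds (∫ θ in Ioo θ1 θ2, g θ)) := by
  have small : ∀ f : ℝ → ℝ, Continuous f → 0 < f 0 → ∀ᶠ δ in nhdsWithin (0:ℝ) (Ioi 0), 0 < f δ :=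
    fun f hf h0 => (hf.tendsto 0).eventually (lt_mem_nhds h0) |>.filter_mono nhdsWithin_le_nhds
  have := tendsto_setIntegral_exhaust (t := fun δ => Ioo (θ1 + δ) (θ2 - δ)) hg
    measurableSet_Ioo (fun δ => measurableSet_Ioo) ?_ ?_
  · refine this.congr' ?_
    filter_upwards [small (fun δ => (θ2 - δ) - (θ1 + δ)) (by fun_prop) (by simpa using hθ)]
      with δ h3
    rw [intervalIntegral.integral_of_le (by linarith), integral_Ioc_eq_integral_Ioo]
  · filter_upwards [self_mem_nhdsWithin] with δ hδ
    have hδ' : 0 < δ := hδ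
    exact Ioo_subset_Ioo (by linarith) (by linarith)
  · rintro θ ⟨h3, h4⟩
    filter_upwards [small (fun δ => θ - (θ1 + δ)) (by fun_prop) (by simpa using h3),
      small (fun δ => (θ2 - δ) - θ) (by fun_prop) (by simpa using h4)] with δ h6 h7
    exact ⟨by linarith, by linarith⟩

/-- The angular component of the Pohozaev field: the energy term drops out. -/
lemma pohoW_angular (a : ℂ) (lam : ℝ) (p : ℂ → ℝ) (φ : ℂ → ℂ) (ρ θ : ℝ) :
    -(pohoW1 a lam p φ (circleMap (proj a) ρ θ)) * sin θ +
      pohoW2 a lam p φ (circleMap (proj a) ρ θ) * cos θ =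
    ρ * ((mg1 a φ (circleMap (proj a) ρ θ) * ((-sin θ : ℝ) : ℂ) +
        mg2 a φ (circleMap (proj a) ρ θ) * (cos θ : ℂ)) *
      (starRingEnd ℂ) (mg1 a φ (circleMap (proj a) ρ θ) * (cos θ : ℂ) +
        mg2 a φ (circleMap (proj a) ρ θ) * (sin θ : ℂ))).re := by
  simp only [pohoW1, pohoW2, Complex.sub_re, Complex.sub_im, circleMap_re, circleMap_im,
    add_sub_cancel_left]
  generalize mg1 a φ (circleMap (proj a) ρ θ) = m1
  generalize mg2 a φ (circleMap (proj a) ρ θ) = m2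
  simp only [Complex.mul_re, Complex.mul_im, Complex.add_re, Complex.add_im, Complex.conj_re,
    Complex.conj_im, Complex.ofReal_re, Complex.ofReal_im]
  ring

/-- The radial component of the Pohozaev field on a circle centred at `π(a)`. -/
lemma pohoW_radial (a : ℂ) (lam : ℝ) (p : ℂ → ℝ) (φ : ℂ → ℂ) (ρ θ : ℝ) :
    pohoW1 a lam p φ (circleMap (proj a) ρ θ) * cos θ +
      pohoW2 a lam p φ (circleMap (proj a) ρ θ) * sin θ =
    ρ * ‖mg1 a φ (circleMap (proj a) ρ θ) * (cos θ : ℂ) +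
        mg2 a φ (circleMap (proj a) ρ θ) * (sin θ : ℂ)‖ ^ 2 -
      ρ / 2 * (mgSq a φ (circleMap (proj a) ρ θ) - lam * p (circleMap (proj a) ρ θ) *
        ‖φ (circleMap (proj a) ρ θ)‖ ^ 2) := by
  have hsc := Real.sin_sq_add_cos_sq θ
  simp only [pohoW1, pohoW2, Complex.sub_re, Complex.sub_im, circleMap_re, circleMap_im,
    add_sub_cancel_left]
  rw [norm_sq_eq (_ + _)]
  generalize mgSq a φ (circleMap (proj a) ρ θ) - lam * p (circleMap (proj a) ρ θ) *
        ‖φ (circleMap (proj a) ρ θ)‖ ^ 2 = e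
  generalize mg1 a φ (circleMap (proj a) ρ θ) = m1
  generalize mg2 a φ (circleMap (proj a) ρ θ) = m2
  simp only [Complex.mul_re, Complex.mul_im, Complex.add_re, Complex.add_im, Complex.conj_re,
    Complex.conj_im, Complex.ofReal_re, Complex.ofReal_im]
  linear_combination (-(ρ / 2) * e) * hsc

/-! ### Flux through the boundary of the half-disk -/

namespace Sol
variable {a : ℂ} {lam r₀ : ℝ} {p : ℂ → ℝ} {φ : ℂ → ℂ}

/-- The angular flux of the Pohozaev field through rays close to the axis is small: `φ` vanishes
on the axis, hence so does the tangential part of its magnetic gradient. -/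
lemma ray_bound (S : Sol a lam r₀ p φ) {r : ℝ} (hr0 : 0 < r) (hr : r < r₀) :
    ∃ K k : ℝ, 0 ≤ K ∧ 0 < k ∧ ∀ δ, 0 < δ → δ < k → ∀ ρ, 0 < ρ → ρ ≤ r →
      ∀ θ ∈ Ioo (-(π / 2)) (π / 2), cos θ ≤ δ →
      |-(pohoW1 a lam p φ (circleMap (proj a) ρ θ)) * sin θ +
        pohoW2 a lam p φ (circleMap (proj a) ρ θ) * cos θ| ≤ K * δ := by
  obtain ⟨C, k, hk, -, hC, hb⟩ := S.near_bdry (R := (r + r₀) / 2) (by linarith)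
  refine ⟨r * ((C + C * k) * (C + C * r)), k / r, by positivity, by positivity, ?_⟩
  intro δ hδ hδk ρ hρ hρr θ hθ hcos
  have hmem : circleMap (proj a) ρ θ ∈ halfDisk (proj a) ((r + r₀) / 2) :=
    circleMap_mem_halfDisk (proj_re a) hρ (by linarith) hθ
  have hc0 : 0 < cos θ := cos_pos_of_mem_Ioo hθ
  have hre : (circleMap (proj a) ρ θ).re = ρ * cos θ := by simp
  have hre' : (circleMap (proj a) ρ θ).re ≤ r * δ := by
    rw [hre]; exact mul_le_mul hρr hcos hc0.le hr0.le
  have hrk : r * δ < k := by rwa [lt_div_iff₀ hr0, mul_comm] at hδk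
  obtain ⟨h1, h2⟩ := hb _ hmem (hre'.trans_lt hrk)
  have h2' : ‖mg2 a φ (circleMap (proj a) ρ θ)‖ ≤ C * (r * δ) :=
    h2.trans (mul_le_mul_of_nonneg_left hre' hC)
  rw [pohoW_angular]
  generalize mg1 a φ (circleMap (proj a) ρ θ) = m1 at *
  generalize mg2 a φ (circleMap (proj a) ρ θ) = m2 at *
  have gen : ∀ s t A B : ℝ, |s| ≤ A → |t| ≤ B → ‖m1 * (s : ℂ) + m2 * (t : ℂ)‖ ≤
      C * A + C * (r * δ) * B := by
    intro s t A B hs ht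
    refine (norm_add_le _ _).trans ?_
    rw [norm_mul, norm_mul, Complex.norm_real, Complex.norm_real, Real.norm_eq_abs,
      Real.norm_eq_abs]
    exact add_le_add (mul_le_mul h1 hs (abs_nonneg _) hC)
      (mul_le_mul h2' ht (abs_nonneg _) (by positivity))
  have e1 := gen (-sin θ) (cos θ) 1 1 (by rw [abs_neg]; exact abs_sin_le_one θ) (abs_cos_le_one θ)
  have e2 := gen (cos θ) (sin θ) δ 1 (by rwa [abs_of_pos hc0]) (abs_sin_le_one θ)
  have e1' : C * 1 + C * (r * δ) * 1 ≤ C + C * k := by nlinarith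
  rw [abs_mul, abs_of_pos hρ]
  calc ρ * |_| ≤ r * ((C + C * k) * (C * δ + C * (r * δ) * 1)) := by
        refine mul_le_mul hρr ?_ (abs_nonneg _) hr0.le
        refine (Complex.abs_re_le_norm _).trans ?_
        rw [norm_mul, RCLike.norm_conj]
        exact mul_le_mul (e1.trans e1') e2 (norm_nonneg _) (by positivity)
    _ = _ := by ring

/-- Divergence theorem for `η W` on the half-disk, where the cutoff `η` vanishes near `a`. The flat
part of the boundary does not contribute. -/
lemma outer_flux (S : Sol a lam r₀ p φ) {η : ℂ → ℝ} (hη : ContDiff ℝ 1 η) {d : ℝ} (hd : 0 < d)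
    (h0 : ∀ y ∈ Metric.ball a d, η y = 0) (hη1 : ∀ y, |η y| ≤ 1) {r : ℝ} (hr0 : 0 < r)
    (hr : r < r₀) :
    ∫ x in halfDisk (proj a) r, cutDiv a lam p φ η x =
      ∫ θ in Ioo (-(π / 2)) (π / 2), r * (η (circleMap (proj a) r θ) *
          pohoW1 a lam p φ (circleMap (proj a) r θ) * cos θ +
        η (circleMap (proj a) r θ) * pohoW2 a lam p φ (circleMap (proj a) r θ) * sin θ) := by
  have hpi := Real.pi_pos
  have hc := proj_re a
  obtain ⟨hI, hE⟩ := polar_halfDisk hc r (cutDiv a lam p φ η)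
  have hint := hI.1 (S.integrableOn_cut hη hd h0 hr)
  have T0 := tendsto_polar_exhaust (κ := 1) hr0 (by linarith) zero_le_one hint
  rw [← hE] at T0
  obtain ⟨K1, k, hK1, hk, hray⟩ := S.ray_bound hr0 hr
  obtain ⟨K2, hK2, hW⟩ := S.bound_W (R := (r + r₀) / 2) (by linarith) hd
  have hηW : ∀ x ∈ halfDisk (proj a) ((r + r₀) / 2), ∀ θ : ℝ,
      |η x * pohoW1 a lam p φ x * cos θ + η x * pohoW2 a lam p φ x * sin θ| ≤ 2 * K2 := by
    intro x hx θ
    by_cases hxa : dist x a < d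
    · rw [h0 x hxa]; simp; exact hK2
    · obtain ⟨w1, w2⟩ := hW x hx (not_lt.1 hxa)
      have gen : ∀ w t : ℝ, |w| ≤ K2 → |t| ≤ 1 → |η x * w * t| ≤ K2 := by
        intro w t hw ht
        rw [abs_mul, abs_mul]
        calc |η x| * |w| * |t| ≤ 1 * K2 * 1 := by
              gcongr
              exact hη1 x
          _ = K2 := by ring
      refine (abs_add_le _ _).trans ?_
      linarith [gen _ _ w1 (abs_cos_le_one θ), gen _ _ w2 (abs_sin_le_one θ)]
  -- the flux through an arc is an integrable function of the angle
  have hcontG : ContinuousOn (fun θ => r * (η (circleMap (proj a) r θ) *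
          pohoW1 a lam p φ (circleMap (proj a) r θ) * cos θ +
        η (circleMap (proj a) r θ) * pohoW2 a lam p φ (circleMap (proj a) r θ) * sin θ))
      (Ioo (-(π / 2)) (π / 2)) := by
    intro θ hθ
    obtain ⟨⟨u, v, hu, hv, -⟩, -⟩ := S.cut_outer hη hd h0 (circleMap_mem_halfDisk hc hr0 hr hθ)
    have hcm : ContinuousAt (circleMap (proj a) r) θ := (continuous_circleMap _ _).continuousAt
    have e1 : ContinuousAt (fun θ => η (circleMap (proj a) r θ) *
        pohoW1 a lam p φ (circleMap (proj a) r θ)) θ :=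
      ContinuousAt.comp (f := circleMap (proj a) r) hu.continuousAt hcm
    have e2 : ContinuousAt (fun θ => η (circleMap (proj a) r θ) *
        pohoW2 a lam p φ (circleMap (proj a) r θ)) θ :=
      ContinuousAt.comp (f := circleMap (proj a) r) hv.continuousAt hcm
    exact (continuousAt_const.mul ((e1.mul continuous_cos.continuousAt).add
      (e2.mul continuous_sin.continuousAt))).continuousWithinAt
  have hG : IntegrableOn (fun θ => r * (η (circleMap (proj a) r θ) *
          pohoW1 a lam p φ (circleMap (proj a) r θ) * cos θ +
        η (circleMap (proj a) r θ) * pohoW2 a lam p φ (circleMap (proj a) r θ) * sin θ))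
      (Ioo (-(π / 2)) (π / 2)) := by
    refine IntegrableOn.of_bound (by simp) (hcontG.aestronglyMeasurable measurableSet_Ioo)
      (r * (2 * K2)) ?_
    refine (ae_restrict_iff' measurableSet_Ioo).2 (Eventually.of_forall fun θ hθ => ?_)
    rw [Real.norm_eq_abs, abs_mul, abs_of_pos hr0]
    exact mul_le_mul_of_nonneg_left
      (hηW _ (circleMap_mem_halfDisk hc hr0 (by linarith) hθ) θ) hr0.le
  have T1 := tendsto_Ioo_exhaust (by linarith) hG
  refine tendsto_nhds_unique T0 ?_
  have hlt : ∀ b : ℝ, 0 < b → ∀ᶠ δ in nhdsWithin (0:ℝ) (Ioi 0), δ < b := fun b hb =>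
    nhdsWithin_le_nhds (Iio_mem_nhds hb)
  have T2 : Tendsto (fun δ : ℝ => 2 * (K1 * δ * r) + δ * (2 * K2) * π) (nhdsWithin 0 (Ioi 0))
      (nhds 0) := by
    have : Continuous (fun δ : ℝ => 2 * (K1 * δ * r) + δ * (2 * K2) * π) := by fun_prop
    simpa using (this.tendsto 0).mono_left nhdsWithin_le_nhds
  refine tendsto_of_tendsto_of_dist T1 (squeeze_zero' (Eventually.of_forall fun _ => dist_nonneg)
    ?_ T2)
  filter_upwards [self_mem_nhdsWithin, hlt r hr0, hlt k hk, hlt (π / 2) (by linarith)]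
    with δ hδ hδr hδk hδπ
  have hδ : 0 < δ := hδ
  rw [one_mul]
  have hθmem : ∀ θ ∈ Icc (-(π / 2) + δ) (π / 2 - δ), θ ∈ Ioo (-(π / 2)) (π / 2) := fun θ hθ =>
    ⟨by linarith [hθ.1], by linarith [hθ.2]⟩
  have hmem : ∀ ρ ∈ Icc δ r, ∀ θ ∈ Icc (-(π / 2) + δ) (π / 2 - δ),
      circleMap (proj a) ρ θ ∈ halfDisk (proj a) r₀ := fun ρ hρ θ hθ =>
    circleMap_mem_halfDisk hc (hδ.trans_le hρ.1) (hρ.2.trans_lt hr) (hθmem θ hθ)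
  have hdiv := polar_div (c := proj a) (θ1 := -(π / 2) + δ) (θ2 := π / 2 - δ) hδr.le (by linarith)
    (fun ρ hρ θ hθ => (S.cut_outer hη hd h0 (hmem ρ hρ θ hθ)).1)
    (fun ρ hρ θ hθ => (S.cut_outer hη hd h0 (hmem ρ hρ θ hθ)).2)
  rw [hdiv, dist_comm, Real.dist_eq]
  have hrays : ∀ θ ∈ Icc (-(π / 2) + δ) (π / 2 - δ), cos θ ≤ δ →
      |∫ ρ in δ..r, (-(η (circleMap (proj a) ρ θ) * pohoW1 a lam p φ (circleMap (proj a) ρ θ)) *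
        sin θ + η (circleMap (proj a) ρ θ) * pohoW2 a lam p φ (circleMap (proj a) ρ θ) * cos θ)| ≤
      K1 * δ * r := by
    intro θ hθ hcos
    have hb := intervalIntegral.norm_integral_le_of_norm_le_const (a := δ) (b := r) (C := K1 * δ)
      (f := fun ρ => (-(η (circleMap (proj a) ρ θ) * pohoW1 a lam p φ (circleMap (proj a) ρ θ)) *
        sin θ + η (circleMap (proj a) ρ θ) * pohoW2 a lam p φ (circleMap (proj a) ρ θ) * cos θ))
      (fun ρ hρ => by
        rw [uIoc_of_le hδr.le] at hρ
        have h1 := hray δ hδ hδk ρ (hδ.trans hρ.1) hρ.2 θ (hθmem θ hθ) hcos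
        have h2 := hη1 (circleMap (proj a) ρ θ)
        have h3 := mul_le_mul h2 h1 (abs_nonneg _) zero_le_one
        rw [← abs_mul, one_mul] at h3
        rw [Real.norm_eq_abs]
        refine le_of_eq_of_le (congrArg abs ?_) h3
        ring)
    rw [Real.norm_eq_abs, abs_of_pos (by linarith : 0 < r - δ)] at hb
    refine hb.trans (mul_le_mul_of_nonneg_left (by linarith) (by positivity))
  have b1 := hrays (π / 2 - δ) ⟨by linarith, le_rfl⟩ (by
    rw [cos_pi_div_two_sub]; exact sin_le hδ.le)
  have b2 := hrays (-(π / 2) + δ) ⟨le_rfl, by linarith⟩ (by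
    rw [show -(π / 2) + δ = -(π / 2 - δ) by ring, cos_neg, cos_pi_div_two_sub]
    exact sin_le hδ.le)
  have b3 : |∫ θ in (-(π / 2) + δ)..(π / 2 - δ), δ * (η (circleMap (proj a) δ θ) *
      pohoW1 a lam p φ (circleMap (proj a) δ θ) * cos θ + η (circleMap (proj a) δ θ) *
      pohoW2 a lam p φ (circleMap (proj a) δ θ) * sin θ)| ≤ δ * (2 * K2) * π := by
    have hb := intervalIntegral.norm_integral_le_of_norm_le_const (a := -(π / 2) + δ)
      (b := π / 2 - δ) (C := δ * (2 * K2)) (f := fun θ => δ * (η (circleMap (proj a) δ θ) *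
      pohoW1 a lam p φ (circleMap (proj a) δ θ) * cos θ + η (circleMap (proj a) δ θ) *
      pohoW2 a lam p φ (circleMap (proj a) δ θ) * sin θ))
      (fun θ hθ => by
        rw [uIoc_of_le (by linarith)] at hθ
        rw [Real.norm_eq_abs, abs_mul, abs_of_pos hδ]
        exact mul_le_mul_of_nonneg_left (hηW _ (circleMap_mem_halfDisk hc hδ (by linarith)
          (hθmem θ ⟨hθ.1.le, hθ.2⟩)) θ) hδ.le)
    rw [Real.norm_eq_abs, abs_of_nonneg (by linarith : 0 ≤ π / 2 - δ - (-(π / 2) + δ))] at hb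
    exact hb.trans (mul_le_mul_of_nonneg_left (by linarith) (by positivity))
  rw [abs_le] at b1 b2 b3 ⊢
  constructor <;> linarith [b1.1, b1.2, b2.1, b2.2, b3.1, b3.2]

end Sol

/-! ### Flux at the pole and the Pohozaev identity -/

lemma pohoIntegrand_eq (a : ℂ) (lam : ℝ) (p : ℂ → ℝ) (φ : ℂ → ℂ) (x : ℂ) (s t : ℝ) :
    pohoIntegrand a φ x s t = (pohoW1 a lam p φ x * s + pohoW2 a lam p φ x * t) -
      1 / 2 * (lam * p x * ‖φ x‖ ^ 2) * ((x - proj a).re * s + (x - proj a).im * t) := by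
  simp only [pohoIntegrand, pohoW1, pohoW2]
  generalize mgSq a φ x = e
  generalize mg1 a φ x = m1
  generalize mg2 a φ x = m2
  simp only [Complex.mul_re, Complex.mul_im, Complex.add_re, Complex.add_im, Complex.conj_re,
    Complex.conj_im, Complex.ofReal_re, Complex.ofReal_im]
  ring

namespace Sol
variable {a : ℂ} {lam r₀ : ℝ} {p : ℂ → ℝ} {φ : ℂ → ℂ}

/-- The full Pohozaev flux through small circles about `a` has the same limit `M_a` as the
boundary integrals without the bounded potential term. -/
lemma tendsto_flux (S : Sol a lam r₀ p φ) {R r Ma : ℝ} (hR : 0 < R) (hr : r ≤ r₀)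
    (hsub : Metric.closedBall a R ⊆ halfDisk (proj a) r)
    (hMa : Tendsto (pohoBdry a φ) (nhdsWithin 0 (Set.Ioi 0)) (nhds Ma)) :
    Tendsto (fun ε => ∫ θ in (-π)..π, ε * (pohoW1 a lam p φ (circleMap a ε θ) * cos θ +
      pohoW2 a lam p φ (circleMap a ε θ) * sin θ)) (nhdsWithin 0 (Set.Ioi 0)) (nhds Ma) := by
  have hpi := Real.pi_pos
  obtain ⟨P, hP, hpot⟩ := S.bound_pot
  have hr0 : 0 ≤ r := (dist_nonneg.trans_lt (hsub (Metric.mem_closedBall_self hR.le)).1).le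
  have T2 : Tendsto (fun ε : ℝ => ε * (P * r) * (2 * π)) (nhdsWithin 0 (Ioi 0)) (nhds 0) := by
    have : Continuous (fun ε : ℝ => ε * (P * r) * (2 * π)) := by fun_prop
    simpa using (this.tendsto 0).mono_left nhdsWithin_le_nhds
  refine tendsto_of_tendsto_of_dist hMa (squeeze_zero' (Eventually.of_forall fun _ => dist_nonneg)
    ?_ T2)
  filter_upwards [self_mem_nhdsWithin, nhdsWithin_le_nhds (Iio_mem_nhds hR)] with ε hε hεR
  have hε : 0 < ε := hε
  have hεR : ε < R := hεR
  have hmem : ∀ θ, circleMap a ε θ ∈ halfDisk (proj a) r := fun θ =>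
    hsub (by rw [Metric.mem_closedBall, dist_circleMap a hε.le]; exact hεR.le)
  have hne : ∀ θ, circleMap a ε θ ≠ a := fun θ => circleMap_ne_center hε.ne'
  have hcm : ∀ θ, ContinuousAt (circleMap a ε) θ := fun θ => (continuous_circleMap _ _).continuousAt
  set F : ℝ → ℝ := fun θ => ε * (pohoW1 a lam p φ (circleMap a ε θ) * cos θ +
      pohoW2 a lam p φ (circleMap a ε θ) * sin θ) with hF
  set G : ℝ → ℝ := fun θ => ε * (1 / 2 * (lam * p (circleMap a ε θ) * ‖φ (circleMap a ε θ)‖ ^ 2) *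
    ((circleMap a ε θ - proj a).re * cos θ + (circleMap a ε θ - proj a).im * sin θ)) with hG
  have hFc : Continuous F := by
    rw [continuous_iff_continuousAt]
    intro θ
    obtain ⟨h1, h2⟩ := S.continuousAt_W (halfDisk_mono _ hr (hmem θ)) (hne θ)
    have e1 : ContinuousAt (fun θ => pohoW1 a lam p φ (circleMap a ε θ)) θ :=
      ContinuousAt.comp (f := circleMap a ε) h1 (hcm θ)
    have e2 : ContinuousAt (fun θ => pohoW2 a lam p φ (circleMap a ε θ)) θ :=
      ContinuousAt.comp (f := circleMap a ε) h2 (hcm θ)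
    exact continuousAt_const.mul ((e1.mul continuous_cos.continuousAt).add
      (e2.mul continuous_sin.continuousAt))
  have hGc : Continuous G := by
    have e1 : Continuous fun θ => φ (circleMap a ε θ) := by
      rw [continuous_iff_continuousAt]
      exact fun θ => ContinuousAt.comp (f := circleMap a ε)
        (S.continuousAt_phi (halfDisk_mono _ hr (hmem θ))) (hcm θ)
    have e2 : Continuous fun θ => p (circleMap a ε θ) :=
      S.hp.continuous.comp (continuous_circleMap _ _)
    have e3 : Continuous fun θ => circleMap a ε θ - proj a :=
      (continuous_circleMap _ _).sub continuous_const
    have e4 := Complex.continuous_re.comp e3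
    have e5 := Complex.continuous_im.comp e3
    exact continuous_const.mul ((continuous_const.mul ((continuous_const.mul e2).mul
      (e1.norm.pow 2))).mul ((e4.mul continuous_cos).add (e5.mul continuous_sin)))
  have hper : Function.Periodic (fun θ => F θ - G θ) (2 * π) := by
    intro θ
    simp only [hF, hG, periodic_circleMap a ε θ, cos_add_two_pi, sin_add_two_pi]
  have hbd : pohoBdry a φ ε = (∫ θ in (-π)..π, F θ) - ∫ θ in (-π)..π, G θ := by
    rw [← intervalIntegral.integral_sub (hFc.intervalIntegrable _ _) (hGc.intervalIntegrable _ _)]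
    have := hper.intervalIntegral_add_eq 0 (-π)
    rw [zero_add, show -π + 2 * π = π by ring] at this
    rw [← this, intervalIntegral.integral_of_le (by linarith), pohoBdry]
    refine integral_congr_ae (Eventually.of_forall fun θ => ?_)
    simp only [hF, hG, pohoIntegrand_eq a lam p φ]
    ring
  rw [hbd, Real.dist_eq]
  have hb := intervalIntegral.norm_integral_le_of_norm_le_const (a := -π) (b := π)
    (C := ε * (P * r)) (f := G) (fun θ _ => by
      obtain ⟨x1, x2⟩ := abs_coord_le (hmem θ)
      have hq := hpot _ (halfDisk_mono _ hr (hmem θ))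
      have hX : |(circleMap a ε θ - proj a).re * cos θ + (circleMap a ε θ - proj a).im * sin θ| ≤
          2 * r := by
        refine (abs_add_le _ _).trans ?_
        rw [abs_mul, abs_mul]
        have := mul_le_mul x1 (abs_cos_le_one θ) (abs_nonneg _) hr0
        have := mul_le_mul x2 (abs_sin_le_one θ) (abs_nonneg _) hr0
        linarith
      have h3 := mul_le_mul hq hX (abs_nonneg _) hP
      rw [← abs_mul] at h3
      rw [Real.norm_eq_abs, hG]
      simp only
      rw [abs_mul, abs_of_pos hε, mul_assoc (1 / 2 : ℝ), abs_mul (1 / 2 : ℝ),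
        abs_of_pos (by norm_num : (0:ℝ) < 1 / 2)]
      refine mul_le_mul_of_nonneg_left ?_ hε.le
      linarith)
  rw [Real.norm_eq_abs, abs_of_pos (by linarith : 0 < π - -π)] at hb
  have e : (∫ θ in (-π)..π, F θ) - (∫ θ in (-π)..π, G θ) - (∫ θ in (-π)..π, F θ) =
    -∫ θ in (-π)..π, G θ := by ring
  rw [e, abs_neg]
  exact hb.trans (le_of_eq (by ring))

/-- Divergence theorem for `χ W` near the pole, where the cutoff `χ` is `1` near `a` and supported
in a small disk about `a`: only the flux through `∂D_ε(a)`, `ε → 0`, survives. -/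
lemma inner_flux (S : Sol a lam r₀ p φ) {χ : ℂ → ℝ} (hχ : ContDiff ℝ 1 χ) {R1 R2 r Ma : ℝ}
    (hR1 : 0 < R1) (hR2 : 0 < R2) (hr : r < r₀)
    (hsub : Metric.closedBall a R2 ⊆ halfDisk (proj a) r)
    (h1 : ∀ y ∈ Metric.ball a R1, χ y = 1) (h0 : ∀ y, R2 ≤ dist y a → χ y = 0)
    (hMa : Tendsto (pohoBdry a φ) (nhdsWithin 0 (Set.Ioi 0)) (nhds Ma)) :
    IntegrableOn (cutDiv a lam p φ χ) (halfDisk (proj a) r) ∧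
      ∫ x in Metric.ball a R2, cutDiv a lam p φ χ x = -Ma := by
  have hpi := Real.pi_pos
  have hI0 : IntegrableOn (cutDiv a lam p φ χ) (halfDisk (proj a) r) := by
    have := (S.integrableOn_pohoDiv hr.le).sub (S.integrableOn_cut (η := fun y => 1 - χ y)
      (contDiff_const.sub hχ) hR1 (fun y hy => by simp [h1 y hy]) hr)
    exact this.congr (Eventually.of_forall fun x => (cutDiv_one_sub x).symm)
  refine ⟨hI0, ?_⟩
  obtain ⟨hI, hE⟩ := polar_ball a R2 (cutDiv a lam p φ χ)
  have hint := hI.1 (hI0.mono_set (Metric.ball_subset_closedBall.trans hsub))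
  have T0 := tendsto_polar_exhaust (κ := 0) hR2 (by linarith) le_rfl hint
  rw [← hE] at T0
  refine tendsto_nhds_unique T0 ((S.tendsto_flux hR2 hr.le hsub hMa).neg.congr' ?_)
  filter_upwards [self_mem_nhdsWithin, nhdsWithin_le_nhds (Iio_mem_nhds hR1),
    nhdsWithin_le_nhds (Iio_mem_nhds hR2)] with ε hε hε1 hε2
  have hε : 0 < ε := hε
  have hε1 : ε < R1 := hε1
  have hε2 : ε < R2 := hε2
  have hmem : ∀ ρ ∈ Icc ε R2, ∀ θ, circleMap a ρ θ ∈ halfDisk (proj a) r₀ := fun ρ hρ θ =>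
    halfDisk_mono _ hr.le (hsub (by
      rw [Metric.mem_closedBall, dist_circleMap a (hε.le.trans hρ.1)]; exact hρ.2))
  have hne : ∀ ρ ∈ Icc ε R2, ∀ θ, circleMap a ρ θ ≠ a := fun ρ hρ θ =>
    circleMap_ne_center (hε.trans_le hρ.1).ne'
  have hdiv := polar_div (c := a) (θ1 := -π) (θ2 := π) hε2.le (by linarith)
    (fun ρ hρ θ _ => S.cut_hasFDerivAt hχ (hmem ρ hρ θ) (hne ρ hρ θ))
    (fun ρ hρ θ _ => S.cut_continuousAt hχ (hmem ρ hρ θ) (hne ρ hρ θ))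
  have hper : ∀ ρ, circleMap a ρ (-π) = circleMap a ρ π := fun ρ => by
    rw [← periodic_circleMap a ρ (-π), show -π + 2 * π = π by ring]
  have e1 : ∀ θ, χ (circleMap a ε θ) = 1 := fun θ => h1 _ (by
    rwa [Metric.mem_ball, dist_circleMap a hε.le])
  have e2 : ∀ θ, χ (circleMap a R2 θ) = 0 := fun θ => h0 _ (by
    rw [dist_circleMap a hR2.le])
  simp only [zero_mul, add_zero, sub_zero]
  rw [hdiv]
  simp only [hper, e1, e2, cos_neg, sin_neg, sin_pi, neg_zero, zero_mul, mul_zero, one_mul,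
    add_zero, intervalIntegral.integral_zero, sub_self, zero_add, zero_sub]

lemma dist_proj_self (ha : 0 < a.re) : dist a (proj a) = a.re := by
  have : a - proj a = (a.re : ℂ) := by
    apply Complex.ext <;> simp
  rw [dist_eq_norm, this, Complex.norm_real, Real.norm_eq_abs, abs_of_pos ha]

/-- The Pohozaev identity on the half-disk: the sum of the divergence theorems for the two pieces
of `W` cut out by a bump function centred at `a`. -/
lemma pohozaev (S : Sol a lam r₀ p φ) {r Ma : ℝ} (har : a.re < r) (hr : r < r₀)
    (hMa : Tendsto (pohoBdry a φ) (nhdsWithin 0 (Set.Ioi 0)) (nhds Ma)) :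
    ∫ x in halfDisk (proj a) r, pohoDiv a lam p φ x =
      (∫ θ in Ioo (-(π / 2)) (π / 2), r * (pohoW1 a lam p φ (circleMap (proj a) r θ) * cos θ +
        pohoW2 a lam p φ (circleMap (proj a) r θ) * sin θ)) - Ma := by
  have ha := S.ha
  have hr0 : 0 < r := ha.trans har
  set R : ℝ := min (a.re / 2) ((r - a.re) / 2) with hR
  have hRpos : 0 < R := lt_min (by linarith) (by linarith)
  have hRa : R ≤ a.re / 2 := min_le_left _ _
  have hRr : R ≤ (r - a.re) / 2 := min_le_right _ _
  have hda := dist_proj_self ha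
  have hsub : Metric.closedBall a R ⊆ halfDisk (proj a) r := by
    intro x hx
    rw [Metric.mem_closedBall] at hx
    refine ⟨?_, ?_⟩
    · linarith [dist_triangle x a (proj a)]
    · have h1 := (Complex.abs_re_le_norm (x - a)).trans_eq (dist_eq_norm x a).symm
      rw [Complex.sub_re] at h1
      linarith [(abs_le.1 h1).1]
  let b : ContDiffBump a := ⟨R / 2, R, by linarith, by linarith⟩
  set χ : ℂ → ℝ := fun y => b y with hχdef
  have hχ : ContDiff ℝ 1 χ := b.contDiff
  have h1 : ∀ y ∈ Metric.ball a (R / 2), χ y = 1 := fun y hy =>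
    b.one_of_mem_closedBall (Metric.ball_subset_closedBall hy)
  have h0 : ∀ y, R ≤ dist y a → χ y = 0 := fun y hy => b.zero_of_le_dist hy
  obtain ⟨hI, hin⟩ := S.inner_flux hχ (by linarith) hRpos hr hsub h1 h0 hMa
  have hη : ContDiff ℝ 1 (fun y => 1 - χ y) := contDiff_const.sub hχ
  have hη0 : ∀ y ∈ Metric.ball a (R / 2), 1 - χ y = 0 := fun y hy => by simp [h1 y hy]
  have hout := S.outer_flux hη (by linarith) hη0 (fun y => by
    have l1 : 0 ≤ χ y := b.nonneg
    have l2 : χ y ≤ 1 := b.le_one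
    rw [abs_le]; constructor <;> linarith) hr0 hr
  have hfull : ∫ x in halfDisk (proj a) r, cutDiv a lam p φ χ x =
      ∫ x in Metric.ball a R, cutDiv a lam p φ χ x := by
    refine setIntegral_eq_of_subset_of_forall_sdiff_eq_zero
      (isOpen_halfDisk _ _).measurableSet (Metric.ball_subset_closedBall.trans hsub)
      fun x hx => ?_
    have hx0 : χ x = 0 := h0 x (not_lt.1 hx.2)
    -- off the ball the bump function attains its minimum
    have hmin : IsLocalMin χ x := Eventually.of_forall fun y => by
      rw [hx0]; exact b.nonneg
    simp [cutDiv, hx0, hmin.fderiv_eq_zero]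
  have hη1 : ∀ θ, 1 - χ (circleMap (proj a) r θ) = 1 := fun θ => by
    rw [h0, sub_zero]
    have := dist_triangle (circleMap (proj a) r θ) a (proj a)
    rw [dist_circleMap _ hr0.le, hda] at this
    linarith
  simp only [hη1, one_mul] at hout
  have hsplit := integral_sub (S.integrableOn_pohoDiv hr.le)
    (S.integrableOn_cut hη (by linarith) hη0 hr)
  rw [integral_congr_ae (Eventually.of_forall fun x => cutDiv_one_sub (χ := χ) x), hsplit,
    hin, hout] at hfull
  linarith

end Sol

/-! ### The derivative of the energy -/

namespace Sol
variable {a : ℂ} {lam r₀ : ℝ} {p : ℂ → ℝ} {φ : ℂ → ℂ}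

lemma continuousAt_energy (S : Sol a lam r₀ p φ) {x : ℂ} (hx : x ∈ halfDisk (proj a) r₀)
    (hxa : x ≠ a) : ContinuousAt (fun x => mgSq a φ x - lam * p x * ‖φ x‖ ^ 2) x := by
  have hC := S.contDiffAt hx hxa
  have d1 := (differentiableAt_mg1 hxa hC).continuousAt
  have d2 := (differentiableAt_mg2 hxa hC).continuousAt
  exact ((d1.norm.pow 2).add (d2.norm.pow 2)).sub
    ((continuousAt_const.mul S.hp.continuous.continuousAt).mul ((S.continuousAt_phi hx).norm.pow 2))

lemma integrableOn_energy (S : Sol a lam r₀ p φ) (hint : IntegrableOn (mgSq a φ)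
    (halfDisk (proj a) r₀)) :
    IntegrableOn (fun x => mgSq a φ x - lam * p x * ‖φ x‖ ^ 2) (halfDisk (proj a) r₀) := by
  obtain ⟨P, -, hP⟩ := S.bound_pot
  exact hint.sub (integrableOn_of_bound (fun x hx =>
    (continuousAt_const.mul S.hp.continuous.continuousAt).mul
      ((S.continuousAt_phi hx).norm.pow 2)) hP)

/-- Differentiation of the energy with respect to the radius: the derivative is the integral of
the energy density over the arc. -/
lemma hasDerivAt_energy (S : Sol a lam r₀ p φ) (hint : IntegrableOn (mgSq a φ)
    (halfDisk (proj a) r₀)) {r : ℝ} (har : a.re < r) (hr : r < r₀) :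
    HasDerivAt (fun s => Efun a φ s (proj a) lam p)
      (∫ θ in Ioo (-(π / 2)) (π / 2), r * (mgSq a φ (circleMap (proj a) r θ) -
        lam * p (circleMap (proj a) r θ) * ‖φ (circleMap (proj a) r θ)‖ ^ 2)) r := by
  have ha := S.ha
  have hr0 : 0 < r := ha.trans har
  have hc := proj_re a
  set e : ℂ → ℝ := fun x => mgSq a φ x - lam * p x * ‖φ x‖ ^ 2 with he
  set J : ℝ → ℝ := fun ρ => ∫ θ in Ioo (-(π / 2)) (π / 2), ρ * e (circleMap (proj a) ρ θ) with hJ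
  have hprod : IntegrableOn (fun q : ℝ × ℝ => q.1 * e (circleMap (proj a) q.1 q.2))
      (Ioo 0 r₀ ×ˢ Ioo (-(π / 2)) (π / 2)) :=
    (polar_halfDisk hc r₀ e).1.1 (S.integrableOn_energy hint)
  have hJint : IntegrableOn J (Ioo 0 r₀) := by
    rw [IntegrableOn, Measure.volume_eq_prod, ← Measure.prod_restrict] at hprod
    exact hprod.integral_prod_left
  have hE : ∀ s, 0 < s → s < r₀ → Efun a φ s (proj a) lam p = ∫ ρ in (0:ℝ)..s, J ρ := by
    intro s hs hsr
    have h2 : Efun a φ s (proj a) lam p = _ := (polar_halfDisk hc s e).2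
    rw [h2, Measure.volume_eq_prod, setIntegral_prod _ (hprod.mono_set
      (prod_mono (Ioo_subset_Ioo_right hsr.le) subset_rfl)),
      intervalIntegral.integral_of_le hs.le, integral_Ioc_eq_integral_Ioo]
  have hcontJ : ContinuousAt J r := by
    obtain ⟨C, hC, hmg⟩ := S.bound_mg (R := (r + r₀) / 2) (ε := (r - a.re) / 2) (by linarith)
      (by linarith)
    obtain ⟨P, hP, hpot⟩ := S.bound_pot
    have hfar : ∀ ρ θ, (r + a.re) / 2 < ρ → (r - a.re) / 2 ≤ dist (circleMap (proj a) ρ θ) a := by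
      intro ρ θ hρ
      have := dist_triangle (circleMap (proj a) ρ θ) a (proj a)
      rw [dist_circleMap _ (by linarith), dist_proj_self ha] at this
      linarith
    have hne : ∀ ρ θ, (r + a.re) / 2 < ρ → circleMap (proj a) ρ θ ≠ a := by
      intro ρ θ hρ h
      have := hfar ρ θ hρ
      rw [h, dist_self] at this
      linarith
    have hnear : ∀ᶠ ρ in nhds r, ρ ∈ Ioo ((r + a.re) / 2) ((r + r₀) / 2) :=
      Ioo_mem_nhds (by linarith) (by linarith)
    refine continuousAt_of_dominated (bound := fun _ => r₀ * (2 * C ^ 2 + P)) ?_ ?_ ?_ ?_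
    · filter_upwards [hnear] with ρ hρ
      refine ContinuousOn.aestronglyMeasurable (fun θ hθ => ?_) measurableSet_Ioo
      have h1 := S.continuousAt_energy (circleMap_mem_halfDisk (r := r₀) hc (by linarith [hρ.1])
        (by linarith [hρ.2]) hθ) (hne ρ θ hρ.1)
      have h2 : ContinuousAt (fun θ => e (circleMap (proj a) ρ θ)) θ :=
        ContinuousAt.comp (f := circleMap (proj a) ρ) h1 (continuous_circleMap _ _).continuousAt
      exact (continuousAt_const.mul h2).continuousWithinAt
    · filter_upwards [hnear] with ρ hρ
      refine (ae_restrict_iff' measurableSet_Ioo).2 (Eventually.of_forall fun θ hθ => ?_)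
      have hρ0 : 0 < ρ := by linarith [hρ.1]
      have hm : circleMap (proj a) ρ θ ∈ halfDisk (proj a) ((r + r₀) / 2) :=
        circleMap_mem_halfDisk hc hρ0 hρ.2 hθ
      obtain ⟨h1, h2⟩ := hmg _ hm (hfar ρ θ hρ.1)
      have h3 := hpot _ (halfDisk_mono _ (by linarith) hm)
      rw [Real.norm_eq_abs, abs_mul, abs_of_pos hρ0]
      refine mul_le_mul (by linarith [hρ.2]) ?_ (abs_nonneg _) (by linarith)
      refine (abs_sub _ _).trans (add_le_add ?_ h3)
      have e1 := pow_le_pow_left₀ (norm_nonneg _) h1 2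
      have e2 := pow_le_pow_left₀ (norm_nonneg _) h2 2
      rw [mgSq, abs_of_nonneg (by positivity)]
      linarith
    · exact integrable_const _
    · refine (ae_restrict_iff' measurableSet_Ioo).2 (Eventually.of_forall fun θ hθ => ?_)
      have h1 := S.continuousAt_energy (circleMap_mem_halfDisk (r := r₀) hc hr0 hr hθ)
        (hne r θ (by linarith))
      have h3 : Continuous fun ρ : ℝ => circleMap (proj a) ρ θ :=
        (continuous_circleMap2 (proj a)).comp (Continuous.prodMk continuous_id continuous_const)
      have h2 : ContinuousAt (fun ρ => e (circleMap (proj a) ρ θ)) r :=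
        ContinuousAt.comp (f := fun ρ => circleMap (proj a) ρ θ) h1 h3.continuousAt
      exact continuousAt_id.mul h2
  have hmain : HasDerivAt (fun s => ∫ ρ in (0:ℝ)..s, J ρ) (J r) r := by
    refine intervalIntegral.integral_hasDerivAt_right ?_ ?_ hcontJ
    · rw [intervalIntegrable_iff_integrableOn_Ioo_of_le hr0.le]
      exact hJint.mono_set (Ioo_subset_Ioo_right hr.le)
    · exact ⟨Ioo 0 r₀, Ioo_mem_nhds hr0 hr, hJint.aestronglyMeasurable⟩
  refine hmain.congr_of_eventuallyEq ?_
  filter_upwards [Ioo_mem_nhds hr0 hr] with s hs using hE s hs.1 hs.2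

/-- The Pohozaev identity expresses the arc integral of the energy density through the radial
part of the magnetic gradient. -/
lemma energy_arc (S : Sol a lam r₀ p φ) {r Ma : ℝ} (har : a.re < r) (hr : r < r₀)
    (hMa : Tendsto (pohoBdry a φ) (nhdsWithin 0 (Set.Ioi 0)) (nhds Ma)) :
    (∫ θ in Ioo (-(π / 2)) (π / 2), r * (mgSq a φ (circleMap (proj a) r θ) -
        lam * p (circleMap (proj a) r θ) * ‖φ (circleMap (proj a) r θ)‖ ^ 2)) =
      2 * (∫ θ in Ioo (-(π / 2)) (π / 2), r *
            ‖mg1 a φ (circleMap (proj a) r θ) * (Real.cos θ : ℂ) +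
              mg2 a φ (circleMap (proj a) r θ) * (Real.sin θ : ℂ)‖ ^ 2) -
          (lam / r) * (∫ x in halfDisk (proj a) r,
            ‖φ x‖ ^ 2 * (2 * p x + fderiv ℝ p x (x - proj a))) -
          (2 / r) * Ma := by
  have ha := S.ha
  have hr0 : 0 < r := ha.trans har
  have hc := proj_re a
  obtain ⟨C, hC, hmg⟩ := S.bound_mg (R := (r + r₀) / 2) (ε := r - a.re) (by linarith)
    (by linarith)
  obtain ⟨P, hP, hpot⟩ := S.bound_pot
  have hfar : ∀ θ, r - a.re ≤ dist (circleMap (proj a) r θ) a := by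
    intro θ
    have := dist_triangle (circleMap (proj a) r θ) a (proj a)
    rw [dist_circleMap _ hr0.le, dist_proj_self ha] at this
    linarith
  have hne : ∀ θ, circleMap (proj a) r θ ≠ a := by
    intro θ h
    have := hfar θ
    rw [h, dist_self] at this
    linarith
  have hm : ∀ θ ∈ Ioo (-(π / 2)) (π / 2),
      circleMap (proj a) r θ ∈ halfDisk (proj a) ((r + r₀) / 2) := fun θ hθ =>
    circleMap_mem_halfDisk hc hr0 (by linarith) hθ
  have hcm : ∀ θ, ContinuousAt (circleMap (proj a) r) θ := fun θ =>
    (continuous_circleMap _ _).continuousAt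
  have I1 : IntegrableOn (fun θ => r * (mgSq a φ (circleMap (proj a) r θ) -
      lam * p (circleMap (proj a) r θ) * ‖φ (circleMap (proj a) r θ)‖ ^ 2))
      (Ioo (-(π / 2)) (π / 2)) := by
    refine IntegrableOn.of_bound (by simp) (ContinuousOn.aestronglyMeasurable (fun θ hθ => ?_)
      measurableSet_Ioo) (r * (2 * C ^ 2 + P))
      ((ae_restrict_iff' measurableSet_Ioo).2 (Eventually.of_forall fun θ hθ => ?_))
    · have h2 := ContinuousAt.comp (f := circleMap (proj a) r) (S.continuousAt_energy
        (halfDisk_mono _ (by linarith) (hm θ hθ)) (hne θ)) (hcm θ)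
      exact (continuousAt_const.mul h2).continuousWithinAt
    · obtain ⟨h1, h2⟩ := hmg _ (hm θ hθ) (hfar θ)
      have h3 := hpot _ (halfDisk_mono _ (by linarith) (hm θ hθ))
      rw [Real.norm_eq_abs, abs_mul, abs_of_pos hr0]
      refine mul_le_mul_of_nonneg_left ((abs_sub _ _).trans (add_le_add ?_ h3)) hr0.le
      have e1 := pow_le_pow_left₀ (norm_nonneg _) h1 2
      have e2 := pow_le_pow_left₀ (norm_nonneg _) h2 2
      rw [mgSq, abs_of_nonneg (by positivity)]
      linarith
  have I2 : IntegrableOn (fun θ => r * ‖mg1 a φ (circleMap (proj a) r θ) * (Real.cos θ : ℂ) +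
      mg2 a φ (circleMap (proj a) r θ) * (Real.sin θ : ℂ)‖ ^ 2) (Ioo (-(π / 2)) (π / 2)) := by
    refine IntegrableOn.of_bound (by simp) (ContinuousOn.aestronglyMeasurable (fun θ hθ => ?_)
      measurableSet_Ioo) (r * (2 * (C * 1)) ^ 2)
      ((ae_restrict_iff' measurableSet_Ioo).2 (Eventually.of_forall fun θ hθ => ?_))
    · have hx := halfDisk_mono _ (by linarith : (r + r₀) / 2 ≤ r₀) (hm θ hθ)
      have hCd := S.contDiffAt hx (hne θ)
      have d1 := ContinuousAt.comp (f := circleMap (proj a) r)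
        (differentiableAt_mg1 (hne θ) hCd).continuousAt (hcm θ)
      have d2 := ContinuousAt.comp (f := circleMap (proj a) r)
        (differentiableAt_mg2 (hne θ) hCd).continuousAt (hcm θ)
      have ec : Continuous fun θ : ℝ => (Real.cos θ : ℂ) :=
        Complex.continuous_ofReal.comp continuous_cos
      have es : Continuous fun θ : ℝ => (Real.sin θ : ℂ) :=
        Complex.continuous_ofReal.comp continuous_sin
      exact (continuousAt_const.mul (((d1.mul ec.continuousAt).add
        (d2.mul es.continuousAt)).norm.pow 2)).continuousWithinAt
    · obtain ⟨h1, h2⟩ := hmg _ (hm θ hθ) (hfar θ)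
      rw [Real.norm_eq_abs, abs_mul, abs_of_pos hr0, abs_of_nonneg (by positivity)]
      exact mul_le_mul_of_nonneg_left (pow_le_pow_left₀ (norm_nonneg _)
        (norm_add_mul_le h1 h2 (abs_cos_le_one θ) (abs_sin_le_one θ)) 2) hr0.le
  have hpz := S.pohozaev har hr hMa
  have hdv : ∫ x in halfDisk (proj a) r, pohoDiv a lam p φ x = lam / 2 *
      ∫ x in halfDisk (proj a) r, ‖φ x‖ ^ 2 * (2 * p x + fderiv ℝ p x (x - proj a)) := by
    simp only [pohoDiv, integral_const_mul]
  have hsplit : (∫ θ in Ioo (-(π / 2)) (π / 2), r * (pohoW1 a lam p φ (circleMap (proj a) r θ) *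
      cos θ + pohoW2 a lam p φ (circleMap (proj a) r θ) * sin θ)) =
      r * (∫ θ in Ioo (-(π / 2)) (π / 2), r *
            ‖mg1 a φ (circleMap (proj a) r θ) * (Real.cos θ : ℂ) +
              mg2 a φ (circleMap (proj a) r θ) * (Real.sin θ : ℂ)‖ ^ 2) -
      r / 2 * ∫ θ in Ioo (-(π / 2)) (π / 2), r * (mgSq a φ (circleMap (proj a) r θ) -
        lam * p (circleMap (proj a) r θ) * ‖φ (circleMap (proj a) r θ)‖ ^ 2) := by
    rw [← integral_const_mul, ← integral_const_mul, ← integral_sub (I2.const_mul r)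
      (I1.const_mul (r / 2))]
    refine integral_congr_ae (Eventually.of_forall fun θ => ?_)
    simp only [pohoW_radial]
    ring
  rw [hdv, hsplit] at hpz
  field_simp
  linarith

end Sol

/-- Derivative of `E`: under the standing hypotheses, the vanishing expansion of order
`1/2` at `a`, and denoting by `Ma` the (existing) limit of the `∂D_ε(a)` boundary
integrals, for every `a₁ < r < r₀` the map `r ↦ E(φ,r,π(a),λ,A_a)` is differentiable with
`dE/dr = 2∫_{∂D_r⁺}|(i∇+A_a)φ·ν|²dσ − (λ/r)∫_{D_r⁺}|φ|²(2p + ∇p·(x−π(a)))dx − (2/r)M_a`. -/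
theorem hasDerivAt_Efun
    (a : ℂ) (ha : 0 < a.re)
    (lam r₀ : ℝ) (hlam : 0 < lam) (har₀ : a.re < r₀)
    (p : ℂ → ℝ) (hp : ContDiff ℝ 1 p) (hppos : ∀ x, 0 < p x)
    (hpbdd : BddAbove (Set.range p))
    (hpgrad : ∃ Cg : ℝ, ∀ x, ‖fderiv ℝ p x‖ ≤ Cg)
    (hsmall : 2 * lam * sSup (Set.range p) * r₀ ^ 2 < 1)
    (φ : ℂ → ℂ)
    (hcont : ContinuousOn φ (closure (halfDisk (proj a) r₀)))
    (hbc : ∀ x ∈ closure (halfDisk (proj a) r₀), x.re = 0 → φ x = 0)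
    (hC2 : ContDiffOn ℝ 2 φ (halfDisk (proj a) r₀ \ {a}))
    (heq : ∀ x ∈ halfDisk (proj a) r₀ \ {a},
      magLap a φ x = ((lam * p x : ℝ) : ℂ) * φ x)
    (hint : IntegrableOn (mgSq a φ) (halfDisk (proj a) r₀))
    (c₁ d₁ : ℝ) (hcd : ¬(c₁ = 0 ∧ d₁ = 0))
    (hexp : (fun x => φ x - modelHalf a c₁ d₁ x) =o[nhdsWithin a {a}ᶜ]
      fun x => Real.sqrt ‖x - a‖)
    (hexp' : (fun x => fderiv ℝ φ x - fderiv ℝ (modelHalf a c₁ d₁) x)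
      =o[nhdsWithin a {a}ᶜ] fun x => (Real.sqrt ‖x - a‖)⁻¹)
    (Ma : ℝ) (hMa : Tendsto (pohoBdry a φ) (nhdsWithin 0 (Set.Ioi 0)) (nhds Ma)) :
    ∀ r : ℝ, a.re < r → r < r₀ →
      HasDerivAt (fun s => Efun a φ s (proj a) lam p)
        (2 * (∫ θ in Ioo (-(π / 2)) (π / 2), r *
            ‖mg1 a φ (circleMap (proj a) r θ) * (Real.cos θ : ℂ) +
              mg2 a φ (circleMap (proj a) r θ) * (Real.sin θ : ℂ)‖ ^ 2) -
          (lam / r) * (∫ x in halfDisk (proj a) r,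
            ‖φ x‖ ^ 2 * (2 * p x + fderiv ℝ p x (x - proj a))) -
          (2 / r) * Ma) r := by
  intro r har hr
  have hq : ∃ Q : ℝ, (∀ z, |lam * p z| ≤ Q) ∧ ∀ z w, |lam * p z - lam * p w| ≤ Q * ‖z - w‖ := by
    obtain ⟨B, hB⟩ := hpbdd
    obtain ⟨Cg, hCg⟩ := hpgrad
    refine ⟨max (lam * B) (lam * Cg), fun z => ?_, fun z w => ?_⟩
    · rw [abs_of_pos (mul_pos hlam (hppos z))]
      exact (mul_le_mul_of_nonneg_left (hB ⟨z, rfl⟩) hlam.le).trans (le_max_left _ _)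
    · have h1 : ‖p z - p w‖ ≤ Cg * ‖z - w‖ :=
        convex_univ.norm_image_sub_le_of_norm_fderiv_le
          (fun x _ => hp.differentiable (by norm_num) x) (fun x _ => hCg x) (mem_univ w)
          (mem_univ z)
      rw [Real.norm_eq_abs] at h1
      rw [← mul_sub, abs_mul, abs_of_pos hlam]
      calc lam * |p z - p w| ≤ lam * (Cg * ‖z - w‖) := mul_le_mul_of_nonneg_left h1 hlam.le
        _ = lam * Cg * ‖z - w‖ := by ring
        _ ≤ _ := mul_le_mul_of_nonneg_right (le_max_right _ _) (norm_nonneg _)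
  have S : Sol a lam r₀ p φ := ⟨ha, hp, hq, hcont, hbc, hC2, heq⟩
  rw [← S.energy_arc har hr hMa]
  exact S.hasDerivAt_energy hint har hr

end
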